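/- Let d and n be integers with d > n ≥ 1, let K ⊆ ℂ be a number field, and let f_1, …, f_d be entire functions on ℂ^n which are algebraically independent over K and have finite order of growth. Assume that for each 1 ≤ ν ≤ n and 1 ≤ i ≤ d there is a polynomial P_{ν,i} ∈ K[X_1, …, X_d] such that (∂/∂z_ν) f_i = P_{ν,i}(f_1, …, f_d) identically on ℂ^n. Let (y_1, …, y_n) be a basis of ℂ^n over ℂ. Then the numbers f_i(s_1 y_1 + ⋯ + s_n y_n), for 1 ≤ i ≤ d and (s_1, …, s_n) ∈ ℤ^n, do not all belong to K. -/

import Mathlib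

/-- `|f|_R`: supremum of `|f z|` over the polydisc `max_i |z_i| ≤ R`. -/
noncomputable def PolydiscSup (n : ℕ) (f : (Fin n → ℂ) → ℂ) (R : ℝ) : ℝ :=
  sSup ((fun z => ‖f z‖) '' {z : Fin n → ℂ | ∀ i, ‖z i‖ ≤ R})

/-- `f : ℂ^n → ℂ` has finite order of growth. -/
def HasFiniteOrderGrowthN (n : ℕ) (f : (Fin n → ℂ) → ℂ) : Prop :=
  ∃ ρ : ℝ, 0 ≤ ρ ∧ ∀ ε > (0 : ℝ), ∃ R₀ : ℝ, ∀ R ≥ R₀,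
    PolydiscSup n f R ≤ Real.exp (R ^ (ρ + ε))

/-! ### Divided differences and Hermite interpolation in one variable -/

/-- Iterated divided difference of `g` with respect to a list of nodes. -/
noncomputable def dividedDifference : List ℂ → (ℂ → ℂ) → ℂ → ℂ
  | [], g => g
  | a :: l, g => dividedDifference l (dslope g a)

theorem Differentiable.dslope {g : ℂ → ℂ} (hg : Differentiable ℂ g) (a : ℂ) :
    Differentiable ℂ (dslope g a) := by
  rw [← differentiableOn_univ] at hg ⊢
  exact (Complex.differentiableOn_dslope Filter.univ_mem).2 hg

theorem Differentiable.dividedDifference (l : List ℂ) {g : ℂ → ℂ} (hg : Differentiable ℂ g) :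
    Differentiable ℂ (dividedDifference l g) := by
  induction l generalizing g with
  | nil => exact hg
  | cons a l ih => exact ih (hg.dslope a)

theorem dslope_add_of_differentiable {g h : ℂ → ℂ} (hg : Differentiable ℂ g)
    (hh : Differentiable ℂ h) (a : ℂ) : dslope (g + h) a = dslope g a + dslope h a := by
  funext x
  rcases eq_or_ne x a with rfl | hx
  · simp [dslope_same, deriv_add (hg x) (hh x)]
  · simp only [dslope_of_ne _ hx, slope, Pi.add_apply, vsub_eq_sub, smul_eq_mul]
    ring

theorem dslope_const_smul_of_differentiable {g : ℂ → ℂ} (hg : Differentiable ℂ g) (c a : ℂ) :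
    dslope (c • g) a = c • dslope g a := by
  funext x
  rcases eq_or_ne x a with rfl | hx
  · simp [dslope_same, deriv_const_smul c (hg x)]
  · simp only [dslope_of_ne _ hx, slope, Pi.smul_apply, vsub_eq_sub, smul_eq_mul]
    ring

theorem dividedDifference_add (l : List ℂ) {g h : ℂ → ℂ} (hg : Differentiable ℂ g)
    (hh : Differentiable ℂ h) :
    dividedDifference l (g + h) = dividedDifference l g + dividedDifference l h := by
  induction l generalizing g h with
  | nil => rfl
  | cons a l ih =>
    simp only [dividedDifference, dslope_add_of_differentiable hg hh]
    exact ih (hg.dslope a) (hh.dslope a)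

theorem dividedDifference_const_smul (l : List ℂ) {g : ℂ → ℂ} (hg : Differentiable ℂ g) (c : ℂ) :
    dividedDifference l (c • g) = c • dividedDifference l g := by
  induction l generalizing g with
  | nil => rfl
  | cons a l ih =>
    simp only [dividedDifference, dslope_const_smul_of_differentiable hg]
    exact ih (hg.dslope a)

theorem norm_dslope_le {g : ℂ → ℂ} (hg : Differentiable ℂ g) {r R M : ℝ} (hR : r < R)
    {a : ℂ} (ha : ‖a‖ ≤ r) (hM : ∀ x, ‖x‖ ≤ R → ‖g x‖ ≤ M) (x : ℂ) (hx : ‖x‖ ≤ R) :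
    ‖dslope g a x‖ ≤ 2 / (R - r) * M := by
  have hr : 0 ≤ r := (norm_nonneg a).trans ha
  have hR0 : R ≠ 0 := by linarith
  have hd := hg.dslope a
  refine Complex.norm_le_of_forall_mem_frontier_norm_le (U := Metric.ball (0 : ℂ) R)
    Metric.isBounded_ball hd.diffContOnCl (fun w hw => ?_) ?_
  · rw [frontier_ball _ hR0, mem_sphere_zero_iff_norm] at hw
    have hwa : R - r ≤ ‖w - a‖ := by
      have := norm_sub_norm_le w a
      linarith
    have hpos : 0 < R - r := by linarith
    have h1 : ‖w - a‖ * ‖dslope g a w‖ = ‖g w - g a‖ := by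
      rw [← sub_smul_dslope g a w, norm_smul]
    have h2 : ‖g w - g a‖ ≤ 2 * M := by
      have := norm_sub_le (g w) (g a)
      have := hM w hw.le
      have := hM a (by linarith)
      linarith
    have h3 : (R - r) * ‖dslope g a w‖ ≤ 2 * M :=
      (mul_le_mul_of_nonneg_right hwa (norm_nonneg _)).trans (h1.le.trans h2)
    rw [div_mul_eq_mul_div, le_div_iff₀ hpos]
    linarith
  · rw [closure_ball _ hR0]
    simpa using hx

theorem norm_dividedDifference_le {r R : ℝ} (hR : r < R) (l : List ℂ) (hl : ∀ a ∈ l, ‖a‖ ≤ r)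
    {g : ℂ → ℂ} (hg : Differentiable ℂ g) {M : ℝ} (hM : ∀ x, ‖x‖ ≤ R → ‖g x‖ ≤ M)
    (x : ℂ) (hx : ‖x‖ ≤ R) :
    ‖dividedDifference l g x‖ ≤ (2 / (R - r)) ^ l.length * M := by
  induction l generalizing g M with
  | nil => simpa [dividedDifference] using hM x hx
  | cons a l ih =>
    have := ih (fun b hb => hl b (List.mem_cons_of_mem _ hb)) (hg.dslope a)
      (norm_dslope_le hg hR (hl a List.mem_cons_self) hM)
    simpa [dividedDifference, pow_succ, mul_assoc] using this

theorem eq_prod_mul_dividedDifference (l : List ℂ) {g : ℂ → ℂ} (hg : Differentiable ℂ g)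
    (h : ∀ x, (l.count x : ℕ∞) ≤ analyticOrderAt g x) (z : ℂ) :
    g z = (l.map (z - ·)).prod * dividedDifference l g z := by
  induction l generalizing g with
  | nil => simp [dividedDifference]
  | cons a l ih =>
    have hd := hg.dslope a
    have hga : g a = 0 := by
      have h1 : (1 : ℕ∞) ≤ analyticOrderAt g a := by
        refine le_trans ?_ (h a)
        simp
      by_contra hne
      have := (hg.analyticAt a).analyticOrderAt_eq_zero.2 hne
      simp [this] at h1
    have hfac : g = (fun x => x - a) * dslope g a := by
      funext x
      simpa [hga] using (sub_smul_dslope g a x).symm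
    have hlin : ∀ x, AnalyticAt ℂ (fun x => x - a) x := fun x => by fun_prop
    have key := ih hd fun x => by
      have hx := h x
      rw [hfac, analyticOrderAt_mul (hlin x) (hd.analyticAt x)] at hx
      rcases eq_or_ne x a with rfl | hxa
      · have h1 : analyticOrderAt (fun y => y - x) x = 1 := by
          have := (hlin x).analyticOrderAt_eq_natCast (n := 1)
          simp only [Nat.cast_one] at this
          rw [this]
          exact ⟨fun _ => 1, analyticAt_const, one_ne_zero, by simp⟩
        rw [h1, List.count_cons_self, Nat.cast_add, Nat.cast_one, add_comm] at hx
        exact (ENat.add_le_add_iff_left (by simp)).1 hx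
      · have h0 : analyticOrderAt (fun y => y - a) x = 0 :=
          (hlin x).analyticOrderAt_eq_zero.2 (sub_ne_zero.2 hxa)
        rwa [h0, zero_add, List.count_cons_of_ne hxa.symm] at hx
    have : g z = (z - a) * dslope g a z := congrFun hfac z
    rw [this, key]
    simp [dividedDifference, mul_assoc]

/-- The list of nodes `0, …, S - 1`, each repeated `T` times. -/
def gridNodes (S T : ℕ) : List ℂ :=
  (List.range S).flatMap fun s : ℕ => List.replicate T (s : ℂ)

theorem length_gridNodes (S T : ℕ) : (gridNodes S T).length = S * T := by
  simp [gridNodes, List.length_flatMap]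

theorem mem_gridNodes {S T : ℕ} {x : ℂ} (hx : x ∈ gridNodes S T) : ∃ s < S, x = (s : ℂ) := by
  simp only [gridNodes, List.mem_flatMap, List.mem_range] at hx
  obtain ⟨s, hs, hx⟩ := hx
  exact ⟨s, hs, List.eq_of_mem_replicate hx⟩

theorem count_gridNodes_le (S T : ℕ) (x : ℂ) : (gridNodes S T).count x ≤ T := by
  induction S with
  | zero => simp [gridNodes]
  | succ S ih =>
    have hsplit : gridNodes (S + 1) T = gridNodes S T ++ List.replicate T (S : ℂ) := by
      simp [gridNodes, List.range_succ, List.flatMap_append]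
    rw [hsplit, List.count_append]
    rcases eq_or_ne x (S : ℂ) with rfl | hx
    · have : (S : ℂ) ∉ gridNodes S T := fun hm => by
        obtain ⟨s, hs, he⟩ := mem_gridNodes hm
        exact hs.ne (by exact_mod_cast he.symm)
      rw [List.count_eq_zero_of_not_mem this]
      simp
    · rw [List.count_eq_zero_of_not_mem (l := List.replicate T (S : ℂ))
        fun hm => hx (List.eq_of_mem_replicate hm)]
      simpa using ih

/-- The space of entire functions of one variable. -/
def entireSubmodule : Submodule ℂ (ℂ → ℂ) where
  carrier := {g | Differentiable ℂ g}
  add_mem' hf hg := Differentiable.add hf hg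
  zero_mem' := differentiable_const _
  smul_mem' c _ hf := Differentiable.const_smul hf c

/-- The value at `z` of an entire function is well approximated by a linear combination of its
derivatives at the points `0, …, S - 1`. -/
theorem exists_hermite_functional (S T : ℕ) {r R : ℝ} (hS : (S : ℝ) ≤ r) (hR : r < R) {z : ℂ}
    (hz : ‖z‖ ≤ r) : ∃ c : Fin S × Fin T → ℂ, ∀ g : ℂ → ℂ, Differentiable ℂ g →
      ∀ M : ℝ, (∀ x, ‖x‖ ≤ R → ‖g x‖ ≤ M) →
        ‖g z - ∑ p, c p * iteratedDeriv p.2 g ((p.1 : ℕ) : ℂ)‖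
          ≤ (4 * r / (R - r)) ^ (S * T) * M := by
  set l := gridNodes S T with hldef
  set Q : ℂ := (l.map (z - ·)).prod with hQ
  have hr : 0 ≤ r := (norm_nonneg z).trans hz
  have hl : ∀ a ∈ l, ‖a‖ ≤ r := fun a ha => by
    obtain ⟨s, hs, rfl⟩ := mem_gridNodes ha
    rw [Complex.norm_natCast]
    exact le_trans (by exact_mod_cast hs.le) hS
  let Λ : entireSubmodule →ₗ[ℂ] ℂ :=
    { toFun := fun g => g.1 z - Q * dividedDifference l g.1 z
      map_add' := fun g h => by
        simp only [Submodule.coe_add, dividedDifference_add l g.2 h.2, Pi.add_apply]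
        ring
      map_smul' := fun c g => by
        simp only [Submodule.coe_smul, dividedDifference_const_smul l g.2, Pi.smul_apply,
          smul_eq_mul, RingHom.id_apply]
        ring }
  let L : Fin S × Fin T → entireSubmodule →ₗ[ℂ] ℂ := fun p =>
    { toFun := fun g => iteratedDeriv p.2 g.1 ((p.1 : ℕ) : ℂ)
      map_add' := fun g h => by
        exact iteratedDeriv_add (g.2.contDiff.contDiffAt) (h.2.contDiff.contDiffAt)
      map_smul' := fun c g => by
        exact iteratedDeriv_const_smul (g.2.contDiff.contDiffAt) c }
  have hmem : Λ ∈ Submodule.span ℂ (Set.range L) := by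
    refine mem_span_of_iInf_ker_le_ker fun g hg => ?_
    simp only [Submodule.mem_iInf, LinearMap.mem_ker] at hg ⊢
    have hg2 : Differentiable ℂ g.1 := g.2
    have := eq_prod_mul_dividedDifference l hg2 (fun x => ?_) z
    · exact sub_eq_zero.2 this
    · by_cases hx : x ∈ l
      · obtain ⟨s, hs, rfl⟩ := mem_gridNodes hx
        refine le_trans (Nat.cast_le.2 (count_gridNodes_le S T _)) ?_
        rw [natCast_le_analyticOrderAt_iff_iteratedDeriv_eq_zero (hg2.analyticAt _)]
        exact fun i hi => hg (⟨s, hs⟩, ⟨i, hi⟩)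
      · rw [List.count_eq_zero_of_not_mem hx]
        simp
  obtain ⟨c, hc⟩ := (Submodule.mem_span_range_iff_exists_fun ℂ).1 hmem
  refine ⟨c, fun g hg M hM => ?_⟩
  have hΛ := congrArg (fun φ : entireSubmodule →ₗ[ℂ] ℂ => φ ⟨g, hg⟩) hc
  simp only [LinearMap.sum_apply, LinearMap.smul_apply, smul_eq_mul] at hΛ
  change ∑ p, c p * iteratedDeriv p.2 g ((p.1 : ℕ) : ℂ) = g z - Q * dividedDifference l g z at hΛ
  rw [hΛ, sub_sub_cancel, norm_mul]
  have hM0 : 0 ≤ M := (norm_nonneg _).trans (hM z (by linarith))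
  have hpos : 0 < R - r := by linarith
  have hQle : ‖Q‖ ≤ (2 * r) ^ l.length := by
    have : ∀ m : List ℂ, (∀ a ∈ m, ‖a‖ ≤ r) → ‖(m.map (z - ·)).prod‖ ≤ (2 * r) ^ m.length := by
      intro m hm
      induction m with
      | nil => simp
      | cons a m ih =>
        rw [List.map_cons, List.prod_cons, norm_mul, List.length_cons, pow_succ']
        have h1 : ‖z - a‖ ≤ 2 * r := by
          have := norm_sub_le z a
          have := hm a List.mem_cons_self
          linarith
        exact mul_le_mul h1 (ih fun b hb => hm b (List.mem_cons_of_mem _ hb)) (norm_nonneg _)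
          (by positivity)
    exact this l hl
  calc ‖Q‖ * ‖dividedDifference l g z‖
      ≤ (2 * r) ^ l.length * ((2 / (R - r)) ^ l.length * M) :=
        mul_le_mul hQle (norm_dividedDifference_le hR l hl hg hM z (by linarith))
          (norm_nonneg _) (by positivity)
    _ = (4 * r / (R - r)) ^ (S * T) * M := by
        rw [← mul_assoc, ← mul_pow, hldef, length_gridNodes]
        congr 2
        ring

section SeveralVariables

open scoped ContDiff

/-! ### Iterated directional derivatives of entire functions of several variables -/

section DirectionalDerivatives

variable {E : Type*} [NormedAddCommGroup E] [NormedSpace ℂ E]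

/-- The derivative of `F` in the direction `v`. -/
noncomputable def dirDeriv (v : E) (F : E → ℂ) : E → ℂ := fun z => fderiv ℂ F z v

/-- The iterated derivative of `F` in the directions given by a list of vectors. -/
noncomputable def iterDirDeriv (l : List E) (F : E → ℂ) : E → ℂ := l.foldr dirDeriv F

@[simp] theorem iterDirDeriv_nil (F : E → ℂ) : iterDirDeriv [] F = F := rfl

@[simp] theorem iterDirDeriv_cons (v : E) (l : List E) (F : E → ℂ) :
    iterDirDeriv (v :: l) F = dirDeriv v (iterDirDeriv l F) := rfl

theorem iterDirDeriv_append (l m : List E) (F : E → ℂ) :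
    iterDirDeriv (l ++ m) F = iterDirDeriv l (iterDirDeriv m F) := List.foldr_append

theorem ContDiff.dirDeriv {F : E → ℂ} (hF : ContDiff ℂ ∞ F) (v : E) :
    ContDiff ℂ ∞ (dirDeriv v F) :=
  (hF.fderiv_right (m := ∞) le_rfl).clm_apply contDiff_const

theorem ContDiff.iterDirDeriv {F : E → ℂ} (hF : ContDiff ℂ ∞ F) (l : List E) :
    ContDiff ℂ ∞ (iterDirDeriv l F) := by
  induction l with
  | nil => exact hF
  | cons v l ih => exact ih.dirDeriv v

theorem ContDiff.differentiable_of_infty {F : E → ℂ} (hF : ContDiff ℂ ∞ F) :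
    Differentiable ℂ F := hF.differentiable (by simp)

theorem dirDeriv_comm {F : E → ℂ} (hF : ContDiff ℂ ∞ F) (v w : E) :
    dirDeriv v (dirDeriv w F) = dirDeriv w (dirDeriv v F) := by
  funext z
  have hd : DifferentiableAt ℂ (fderiv ℂ F) z :=
    ((hF.fderiv_right (m := ∞) le_rfl).differentiable (by simp)) z
  have h : ∀ u u' : E, dirDeriv u (dirDeriv u' F) z = fderiv ℂ (fderiv ℂ F) z u u' := by
    intro u u'
    change fderiv ℂ (fun y => fderiv ℂ F y u') z u = _
    rw [fderiv_clm_apply hd (differentiableAt_const _)]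
    simp
  rw [h, h]
  exact (hF.contDiffAt.isSymmSndFDerivAt (by
    simpa using ENat.LEInfty.out)) v w

theorem iterDirDeriv_perm {F : E → ℂ} (hF : ContDiff ℂ ∞ F) {l m : List E} (h : l.Perm m) :
    iterDirDeriv l F = iterDirDeriv m F := by
  induction h with
  | nil => rfl
  | cons v _ ih => simp [ih]
  | swap v w l => exact dirDeriv_comm (hF.iterDirDeriv l) w v
  | trans _ _ ih₁ ih₂ => exact ih₁.trans ih₂

theorem dirDeriv_add {F G : E → ℂ} (hF : ContDiff ℂ ∞ F) (hG : ContDiff ℂ ∞ G) (v : E) :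
    dirDeriv v (F + G) = dirDeriv v F + dirDeriv v G := by
  funext z
  simp [dirDeriv, fderiv_add (hF.differentiable_of_infty z) (hG.differentiable_of_infty z)]

theorem dirDeriv_const_smul {F : E → ℂ} (hF : ContDiff ℂ ∞ F) (c : ℂ) (v : E) :
    dirDeriv v (c • F) = c • dirDeriv v F := by
  funext z
  simp [dirDeriv, fderiv_const_smul (hF.differentiable_of_infty z)]

theorem iterDirDeriv_add {F G : E → ℂ} (hF : ContDiff ℂ ∞ F) (hG : ContDiff ℂ ∞ G)
    (l : List E) : iterDirDeriv l (F + G) = iterDirDeriv l F + iterDirDeriv l G := by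
  induction l with
  | nil => rfl
  | cons v l ih =>
    simp only [iterDirDeriv_cons, ih]
    exact dirDeriv_add (hF.iterDirDeriv l) (hG.iterDirDeriv l) v

theorem iterDirDeriv_const_smul {F : E → ℂ} (hF : ContDiff ℂ ∞ F) (c : ℂ)
    (l : List E) : iterDirDeriv l (c • F) = c • iterDirDeriv l F := by
  induction l with
  | nil => rfl
  | cons v l ih =>
    simp only [iterDirDeriv_cons, ih]
    exact dirDeriv_const_smul (hF.iterDirDeriv l) c v

theorem iterDirDeriv_zero (l : List E) : iterDirDeriv l (0 : E → ℂ) = 0 := by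
  have := iterDirDeriv_const_smul (contDiff_const : ContDiff ℂ ∞ (fun _ : E => (0 : ℂ))) 0 l
  simpa using this

theorem contDiff_sum_smul {ι : Type*} (s : Finset ι) (c : ι → ℂ) {G : ι → E → ℂ}
    (hG : ∀ i, ContDiff ℂ ∞ (G i)) : ContDiff ℂ ∞ (∑ i ∈ s, c i • G i) := by
  have : (∑ i ∈ s, c i • G i) = fun x => ∑ i ∈ s, c i • G i x := by
    funext x
    simp
  rw [this]
  exact ContDiff.sum fun i _ => (hG i).const_smul (c i)

theorem iterDirDeriv_sum {ι : Type*} (s : Finset ι) (c : ι → ℂ) {G : ι → E → ℂ}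
    (hG : ∀ i, ContDiff ℂ ∞ (G i)) (l : List E) :
    iterDirDeriv l (∑ i ∈ s, c i • G i) = ∑ i ∈ s, c i • iterDirDeriv l (G i) := by
  classical
  induction s using Finset.induction_on with
  | empty => simpa using iterDirDeriv_zero l
  | insert a s ha ih =>
    have ha' : ContDiff ℂ ∞ (c a • G a) := (hG a).const_smul (c a)
    rw [Finset.sum_insert ha, Finset.sum_insert ha,
      iterDirDeriv_add ha' (contDiff_sum_smul s c hG) l, iterDirDeriv_const_smul (hG a), ih]

theorem iterDirDeriv_comp_affine {E' : Type*} [NormedAddCommGroup E'] [NormedSpace ℂ E']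
    (A : E' →L[ℂ] E) (b : E) {F : E → ℂ} (hF : ContDiff ℂ ∞ F) (l : List E') :
    iterDirDeriv l (fun t => F (A t + b)) = fun t => iterDirDeriv (l.map A) F (A t + b) := by
  induction l with
  | nil => rfl
  | cons v l ih =>
    rw [iterDirDeriv_cons, ih]
    funext t
    have h1 : HasFDerivAt (fun t => A t + b) A t := A.hasFDerivAt.add_const b
    have h2 := ((hF.iterDirDeriv (l.map A)).differentiable_of_infty (A t + b)).hasFDerivAt
    have h3 := (h2.comp t h1).fderiv
    change fderiv ℂ ((iterDirDeriv (l.map A) F) ∘ fun t => A t + b) t v = _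
    rw [h3]
    rfl

theorem iteratedDeriv_line {F : E → ℂ} (hF : ContDiff ℂ ∞ F) (u v : E) (k : ℕ) :
    iteratedDeriv k (fun x : ℂ => F (u + x • v)) =
      fun x => iterDirDeriv (List.replicate k v) F (u + x • v) := by
  induction k with
  | zero => simp
  | succ k ih =>
    rw [iteratedDeriv_succ, ih]
    funext x
    have h1 : HasDerivAt (fun x : ℂ => u + x • v) v x := by
      simpa using ((hasDerivAt_id x).smul_const v).const_add u
    have h2 := ((hF.iterDirDeriv (List.replicate k v)).differentiable_of_infty
      (u + x • v)).hasFDerivAt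
    exact (h2.comp_hasDerivAt x h1).deriv

theorem differentiable_line {F : E → ℂ} (hF : ContDiff ℂ ∞ F) (u v : E) :
    Differentiable ℂ (fun x : ℂ => F (u + x • v)) :=
  hF.differentiable_of_infty.comp (by fun_prop)

theorem eq_zero_of_iterDirDeriv_eq_zero {F : E → ℂ} (hF : ContDiff ℂ ∞ F)
    (h : ∀ l, iterDirDeriv l F 0 = 0) (t : E) : F t = 0 := by
  have hd := differentiable_line hF 0 t
  have := Complex.taylorSeries_eq_of_entire hd 0 1
  simp only [iteratedDeriv_line hF] at this
  simpa [h] using this.symm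

/-- Vanishing along words in a spanning family implies vanishing along all words. -/
theorem iterDirDeriv_eq_zero_of_span {ι : Type*} {v : ι → E}
    (hv : Submodule.span ℂ (Set.range v) = ⊤) {F : E → ℂ} (hF : ContDiff ℂ ∞ F) {p : E} {M : ℕ}
    (h : ∀ w : List ι, w.length < M → iterDirDeriv (w.map v) F p = 0)
    (l : List E) (hl : l.length < M) : iterDirDeriv l F p = 0 := by
  suffices H : ∀ (l : List E) (w : List ι), w.length + l.length < M →
      iterDirDeriv (w.map v ++ l) F p = 0 by
    simpa using H l [] (by simpa using hl)
  intro l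
  induction l with
  | nil =>
    intro w hw
    simpa using h w (by simpa using hw)
  | cons x l ih =>
    intro w hw
    have hG := hF.iterDirDeriv l
    have hx : x ∈ Submodule.span ℂ (Set.range v) := hv ▸ Submodule.mem_top
    have hrw : ∀ y : E, iterDirDeriv (w.map v ++ y :: l) F =
        iterDirDeriv (w.map v) (dirDeriv y (iterDirDeriv l F)) := fun y =>
      iterDirDeriv_append _ _ _
    induction hx using Submodule.span_induction with
    | mem y hy =>
      obtain ⟨i, rfl⟩ := hy
      have := ih (w ++ [i]) (by simp only [List.length_append, List.length_cons,
        List.length_nil] at hw ⊢; omega)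
      simpa using this
    | zero =>
      have : dirDeriv 0 (iterDirDeriv l F) = 0 := by funext z; simp [dirDeriv]
      rw [hrw, this, iterDirDeriv_zero]
      rfl
    | add y z _ _ hy hz =>
      have : dirDeriv (y + z) (iterDirDeriv l F) =
          dirDeriv y (iterDirDeriv l F) + dirDeriv z (iterDirDeriv l F) := by
        funext z; simp [dirDeriv]
      rw [hrw] at hy hz ⊢
      rw [this, iterDirDeriv_add (hG.dirDeriv y) (hG.dirDeriv z), Pi.add_apply]
      simp only [List.length_cons] at hw
      rw [hy hw, hz hw, add_zero]
    | smul a y _ hy =>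
      have : dirDeriv (a • y) (iterDirDeriv l F) = a • dirDeriv y (iterDirDeriv l F) := by
        funext z; simp [dirDeriv]
      rw [hrw] at hy ⊢
      rw [this, iterDirDeriv_const_smul (hG.dirDeriv y), Pi.smul_apply]
      simp only [List.length_cons] at hw
      rw [hy hw, smul_zero]

/-- Iterated Cauchy estimate. -/
theorem norm_iterDirDeriv_le {F : E → ℂ} (hF : ContDiff ℂ ∞ F) {p : E} {C ρ M : ℝ} (hC : 0 < C)
    (hρ : 0 < ρ) (l : List E) (hl : ∀ v ∈ l, ‖v‖ ≤ C) {a : ℝ}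
    (hM : ∀ z, ‖z - p‖ ≤ a + l.length * ρ → ‖F z‖ ≤ M) {z : E} (hz : ‖z - p‖ ≤ a) :
    ‖iterDirDeriv l F z‖ ≤ (C / ρ) ^ l.length * M := by
  induction l generalizing a z with
  | nil => simpa using hM z (by simpa using hz)
  | cons v l ih =>
    set G := iterDirDeriv l F with hGdef
    have hG : ContDiff ℂ ∞ G := hF.iterDirDeriv l
    have hd := differentiable_line hG z v
    have hderiv : dirDeriv v G z = deriv (fun x : ℂ => G (z + x • v)) 0 := by
      have := congrFun (iteratedDeriv_line hG z v 1) 0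
      simpa using this.symm
    rw [iterDirDeriv_cons, hderiv]
    have := Complex.norm_deriv_le_of_forall_mem_sphere_norm_le (c := 0) (R := ρ / C)
      (C := (C / ρ) ^ l.length * M) (by positivity) hd.diffContOnCl (fun x hx => ?_)
    · refine this.trans (le_of_eq ?_)
      rw [List.length_cons, pow_succ]
      field_simp
    · rw [mem_sphere_zero_iff_norm] at hx
      refine ih (fun w hw => hl w (List.mem_cons_of_mem _ hw)) (a := a + ρ) (fun y hy => hM y ?_) ?_
      · refine hy.trans (le_of_eq ?_)
        push_cast [List.length_cons]
        ring
      · have h1 : ‖x • v‖ ≤ ρ := by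
          rw [norm_smul, hx]
          calc ρ / C * ‖v‖ ≤ ρ / C * C := by
                gcongr
                exact hl v List.mem_cons_self
            _ = ρ := by field_simp
        calc ‖z + x • v - p‖ = ‖(z - p) + x • v‖ := by congr 1; abel
          _ ≤ a + ρ := (norm_add_le _ _).trans (add_le_add hz h1)

end DirectionalDerivatives

/-! ### A Schwarz lemma for functions vanishing on a grid -/

theorem update_eq_single_add {n : ℕ} (t : Fin n → ℂ) (j : Fin n) (x : ℂ) :
    Function.update t j x = Function.update t j 0 + x • Pi.single j (1 : ℂ) := by
  funext i
  rcases eq_or_ne i j with rfl | h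
  · simp
  · simp [h]

/-- The projection killing the `j`-th coordinate. -/
noncomputable def killCoord {n : ℕ} (j : Fin n) : (Fin n → ℂ) →L[ℂ] (Fin n → ℂ) :=
  ContinuousLinearMap.pi fun i => if i = j then 0 else ContinuousLinearMap.proj i

theorem killCoord_apply {n : ℕ} (j : Fin n) (t : Fin n → ℂ) :
    killCoord j t = Function.update t j 0 := by
  funext i
  rcases eq_or_ne i j with rfl | h
  · simp [killCoord]
  · simp [killCoord, h]

theorem norm_update_le {n : ℕ} {t : Fin n → ℂ} {R : ℝ} (ht : ‖t‖ ≤ R) (j : Fin n) {x : ℂ}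
    (hx : ‖x‖ ≤ R) : ‖Function.update t j x‖ ≤ R := by
  have hR : 0 ≤ R := (norm_nonneg _).trans hx
  refine (pi_norm_le_iff_of_nonneg hR).2 fun i => ?_
  rcases eq_or_ne i j with rfl | h
  · simpa using hx
  · simpa [h] using (norm_le_pi_norm t i).trans ht

theorem norm_le_of_vanish_on_partial_grid {n : ℕ} {S T : ℕ} {r R : ℝ} (hS : (S : ℝ) ≤ r)
    (hR : r < R) (hη : 4 * r / (R - r) ≤ 1) {z : Fin n → ℂ} (hz : ‖z‖ ≤ r) (J : Finset (Fin n))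
    {F : (Fin n → ℂ) → ℂ} (hF : ContDiff ℂ ∞ F) {M : ℝ} (hM : ∀ t, ‖t‖ ≤ R → ‖F t‖ ≤ M)
    (hV : ∀ t : Fin n → ℂ, (∀ i ∈ J, ∃ s < S, t i = (s : ℕ)) →
      ∀ l : List (Fin n → ℂ), l.length ≤ J.card * T → iterDirDeriv l F t = 0) :
    ‖F z‖ ≤ (2 ^ J.card - 1) * ((4 * r / (R - r)) ^ (S * T) * M) := by
  have hr : 0 ≤ r := (norm_nonneg z).trans hz
  have hpos : 0 < R - r := by linarith
  set η := (4 * r / (R - r)) ^ (S * T) with hηdef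
  have hη1 : η ≤ 1 := pow_le_one₀ (by positivity) hη
  have hη0 : 0 ≤ η := by positivity
  induction J using Finset.induction_on generalizing F M with
  | empty =>
    have := hV z (by simp) [] (by simp)
    simp only [iterDirDeriv_nil] at this
    simp [this]
  | insert j J hj ih =>
    have hM0 : 0 ≤ M := (norm_nonneg _).trans (hM z (by linarith))
    have hzj : ‖z j‖ ≤ r := (norm_le_pi_norm z j).trans hz
    obtain ⟨c, hc⟩ := exists_hermite_functional S T hS hR hzj
    set e : Fin n → ℂ := Pi.single j 1 with he
    let G : Fin S × Fin T → (Fin n → ℂ) → ℂ := fun p t =>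
      iterDirDeriv (List.replicate p.2 e) F (killCoord j t + ((p.1 : ℕ) : ℂ) • e)
    have hG : ∀ p, ContDiff ℂ ∞ (G p) := fun p =>
      (hF.iterDirDeriv _).comp ((killCoord j).contDiff.add contDiff_const)
    set H : (Fin n → ℂ) → ℂ := ∑ p, c p • G p with hH
    have hHsmooth : ContDiff ℂ ∞ H := contDiff_sum_smul _ c hG
    have hslice : ∀ t : Fin n → ℂ, ‖t‖ ≤ R →
        ‖F (Function.update t j (z j)) - H t‖ ≤ η * M := by
      intro t ht
      have := hc (fun x => F (killCoord j t + x • e)) (differentiable_line hF _ _) M (fun x hx => by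
        rw [killCoord_apply, ← update_eq_single_add]
        exact hM _ (norm_update_le ht j hx))
      simp only [iteratedDeriv_line hF] at this
      rw [update_eq_single_add, ← killCoord_apply]
      simpa [hH, G] using this
    have hHM : ∀ t, ‖t‖ ≤ R → ‖H t‖ ≤ 2 * M := by
      intro t ht
      have h1 := hslice t ht
      have h2 := hM _ (norm_update_le ht j (x := z j) (by linarith))
      have h3 := norm_sub_le (F (Function.update t j (z j)))
        (F (Function.update t j (z j)) - H t)
      rw [sub_sub_cancel] at h3
      have : η * M ≤ M := mul_le_of_le_one_left hM0 hη1
      linarith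
    have hHV : ∀ t : Fin n → ℂ, (∀ i ∈ J, ∃ s < S, t i = (s : ℕ)) →
        ∀ l : List (Fin n → ℂ), l.length ≤ J.card * T → iterDirDeriv l H t = 0 := by
      intro t ht l hl
      rw [hH, iterDirDeriv_sum _ _ hG, Finset.sum_apply]
      refine Finset.sum_eq_zero fun p _ => ?_
      have hcomp := iterDirDeriv_comp_affine (killCoord j) (((p.1 : ℕ) : ℂ) • e)
        (hF.iterDirDeriv (List.replicate p.2 e)) l
      rw [Pi.smul_apply, hcomp]
      simp only [← iterDirDeriv_append]
      rw [hV, smul_zero]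
      · intro i hi
        rw [killCoord_apply, ← update_eq_single_add]
        rcases eq_or_ne i j with rfl | hij
        · exact ⟨p.1, p.1.2, by simp⟩
        · simpa [hij] using ht i (Finset.mem_of_mem_insert_of_ne hi hij)
      · have := p.2.2
        simp only [List.length_append, List.length_map, List.length_replicate,
          Finset.card_insert_of_notMem hj, add_mul, one_mul]
        omega
    have h1 := ih hHsmooth hHM hHV
    have h2 := hslice z (by linarith)
    rw [Function.update_eq_self] at h2
    have h3 : ‖F z‖ ≤ ‖F z - H z‖ + ‖H z‖ := by
      simpa using norm_add_le (F z - H z) (H z)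
    rw [Finset.card_insert_of_notMem hj, pow_succ]
    nlinarith

theorem norm_le_of_vanish_on_grid {n : ℕ} {S T : ℕ} {r R : ℝ} (hS : (S : ℝ) ≤ r)
    (hR : r < R) (hη : 4 * r / (R - r) ≤ 1) {z : Fin n → ℂ} (hz : ‖z‖ ≤ r)
    {F : (Fin n → ℂ) → ℂ} (hF : ContDiff ℂ ∞ F) {M : ℝ} (hM : ∀ t, ‖t‖ ≤ R → ‖F t‖ ≤ M)
    (hV : ∀ s : Fin n → Fin S, ∀ l : List (Fin n → ℂ), l.length ≤ n * T →
      iterDirDeriv l F (fun i => ((s i : ℕ) : ℂ)) = 0) :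
    ‖F z‖ ≤ 2 ^ n * ((4 * r / (R - r)) ^ (S * T) * M) := by
  have hr : 0 ≤ r := (norm_nonneg z).trans hz
  have hpos : 0 < R - r := by linarith
  have hM0 : 0 ≤ M := (norm_nonneg _).trans (hM z (by linarith))
  have := norm_le_of_vanish_on_partial_grid (T := T) hS hR hη hz Finset.univ hF hM (by
    intro t ht l hl
    choose s hs hts using fun i => ht i (Finset.mem_univ i)
    have hteq : t = fun i => (((⟨s i, hs i⟩ : Fin S) : ℕ) : ℂ) := funext hts
    rw [hteq]
    exact hV (fun i => ⟨s i, hs i⟩) l (by simpa using hl))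
  refine this.trans ?_
  rw [Finset.card_univ, Fintype.card_fin]
  gcongr
  linarith

/-! ### Houses of algebraic integers and polynomials with algebraic integer coefficients -/

section Substitution

open NumberField MvPolynomial

variable {K : Type*} [Field K] {d : ℕ}

/-- The function obtained by substituting the functions `g j` into a polynomial. -/
noncomputable def substFun {E : Type*} (φ : K →+* ℂ) (g : Fin d → E → ℂ)
    (G : MvPolynomial (Fin d) (𝓞 K)) : E → ℂ :=
  fun t => eval₂ (φ.comp (algebraMap (𝓞 K) K)) (fun j => g j t) G

theorem substFun_C {E : Type*} (φ : K →+* ℂ) (g : Fin d → E → ℂ) (a : 𝓞 K) :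
    substFun φ g (C a) = fun _ => φ a := by
  funext t
  simp [substFun]

theorem substFun_add {E : Type*} (φ : K →+* ℂ) (g : Fin d → E → ℂ)
    (P Q : MvPolynomial (Fin d) (𝓞 K)) :
    substFun φ g (P + Q) = substFun φ g P + substFun φ g Q := by
  funext t
  simp [substFun]

theorem substFun_mul_X {E : Type*} (φ : K →+* ℂ) (g : Fin d → E → ℂ)
    (P : MvPolynomial (Fin d) (𝓞 K)) (i : Fin d) :
    substFun φ g (P * X i) = fun t => substFun φ g P t * g i t := by
  funext t
  simp [substFun]

end Substitution

section Heights

open NumberField MvPolynomial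

variable {K : Type*} [Field K] [NumberField K]

theorem house_zero : house (0 : K) = 0 := by
  simpa using house_intCast (K := K) 0

theorem house_one : house (1 : K) = 1 := by
  simpa using house_intCast (K := K) 1

theorem one_le_norm_mul_house_pow (φ : K →+* ℂ) {γ : 𝓞 K} (hγ : γ ≠ 0) :
    1 ≤ ‖φ γ‖ * house (γ : K) ^ (Module.finrank ℚ K - 1) := by
  refine le_trans ?_ (norm_norm_le_norm_mul_house_pow (γ : K) φ)
  have h0 : Algebra.norm ℚ (γ : K) ≠ 0 :=
    Algebra.norm_ne_zero_iff.2 (by simpa using hγ)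
  obtain ⟨k, hk⟩ : ∃ k : ℤ, (k : ℚ) = Algebra.norm ℚ (γ : K) :=
    IsIntegrallyClosed.isIntegral_iff.1
      (Algebra.isIntegral_norm ℚ (RingOfIntegers.isIntegral_coe γ))
  rw [← hk] at h0 ⊢
  have hk0 : k ≠ 0 := by exact_mod_cast h0
  have : (1 : ℝ) ≤ |(k : ℝ)| := by exact_mod_cast Int.one_le_abs hk0
  rw [← Rat.norm_cast_real]
  simpa using this

/-- Siegel's lemma over the ring of integers of a number field, in the case of at least twice as
many unknowns as equations. -/
theorem exists_siegel_constant (K : Type*) [Field K] [NumberField K] :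
    ∃ C : ℝ, 1 ≤ C ∧ ∀ (α β : Type) [Fintype α] [Fintype β] (a : Matrix α β (𝓞 K)) (A : ℝ),
      1 ≤ A → 0 < Fintype.card α → 2 * Fintype.card α ≤ Fintype.card β →
      (∀ k l, house (a k l : K) ≤ A) →
      ∃ ξ : β → 𝓞 K, ξ ≠ 0 ∧ a.mulVec ξ = 0 ∧
        ∀ l, house (ξ l : K) ≤ C * (C * Fintype.card β * A) := by
  classical
  obtain ⟨c, hc⟩ : ∃ c : ℝ, ∀ (α β : Type) [Fintype α] [Fintype β] (a : Matrix α β (𝓞 K)) (A : ℝ),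
      a ≠ 0 → 0 < Fintype.card α → Fintype.card α < Fintype.card β →
      (∀ k l, house (a k l : K) ≤ A) →
      ∃ ξ : β → 𝓞 K, ξ ≠ 0 ∧ a.mulVec ξ = 0 ∧ ∀ l, house (ξ l : K) ≤ c *
        ((c * Fintype.card β * A) ^
          ((Fintype.card α : ℝ) / (Fintype.card β - Fintype.card α))) :=
    ⟨_, fun α β _ _ a A ha h0 h1 hA =>
      house.exists_ne_zero_int_vec_house_le K a ha h0 h1 rfl hA rfl⟩
  refine ⟨max 1 |c|, le_max_left _ _, fun α β _ _ a A hA h0 h1 hle => ?_⟩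
  set C := max 1 |c| with hC
  have hC1 : 1 ≤ C := le_max_left _ _
  have hCc : |c| ≤ C := le_max_right _ _
  have hβ : (1 : ℝ) ≤ Fintype.card β := by exact_mod_cast (by omega : 1 ≤ Fintype.card β)
  have hbase : 1 ≤ C * Fintype.card β * A :=
    one_le_mul_of_one_le_of_one_le (one_le_mul_of_one_le_of_one_le hC1 hβ) hA
  by_cases ha : a = 0
  · have : Nonempty β := Fintype.card_pos_iff.1 (by omega)
    refine ⟨1, one_ne_zero, by rw [ha, Matrix.zero_mulVec], fun l => ?_⟩
    have : house (((1 : β → 𝓞 K) l : 𝓞 K) : K) = 1 := by simp [house_one]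
    rw [this]
    exact one_le_mul_of_one_le_of_one_le hC1 hbase
  · obtain ⟨ξ, hξ0, hξ, hb⟩ := hc α β a A ha h0 (by omega) hle
    refine ⟨ξ, hξ0, hξ, fun l => (hb l).trans ?_⟩
    have hα : (0 : ℝ) < Fintype.card α := by exact_mod_cast h0
    have h1' : 2 * (Fintype.card α : ℝ) ≤ Fintype.card β := by exact_mod_cast h1
    set e : ℝ := (Fintype.card α : ℝ) / (Fintype.card β - Fintype.card α)
    have he : e ≤ 1 := by
      rw [div_le_one (by linarith)]
      linarith
    calc c * (c * Fintype.card β * A) ^ e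
        ≤ |c * (c * Fintype.card β * A) ^ e| := le_abs_self _
      _ = |c| * |(c * Fintype.card β * A) ^ e| := abs_mul _ _
      _ ≤ |c| * |c * Fintype.card β * A| ^ e := by
          gcongr
          exact Real.abs_rpow_le_abs_rpow _ _
      _ ≤ C * (C * Fintype.card β * A) ^ e := by
          have he0 : 0 ≤ e := div_nonneg hα.le (by linarith)
          have : |c * Fintype.card β * A| ≤ C * Fintype.card β * A := by
            rw [abs_mul, abs_mul, abs_of_nonneg (by linarith : (0 : ℝ) ≤ Fintype.card β),
              abs_of_nonneg (by linarith : (0 : ℝ) ≤ A)]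
            gcongr
          gcongr
      _ ≤ C * (C * Fintype.card β * A) := by
          gcongr
          exact Real.rpow_le_self_of_one_le hbase he

variable {d : ℕ}

/-- The sum of the houses of the coefficients of a polynomial. -/
noncomputable def houseLength (G : MvPolynomial (Fin d) (𝓞 K)) : ℝ :=
  ∑ u ∈ G.support, house ((G.coeff u : 𝓞 K) : K)

theorem houseLength_nonneg (G : MvPolynomial (Fin d) (𝓞 K)) : 0 ≤ houseLength G :=
  Finset.sum_nonneg fun _ _ => house_nonneg _

theorem houseLength_eq_sum {G : MvPolynomial (Fin d) (𝓞 K)} {s : Finset (Fin d →₀ ℕ)}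
    (hs : G.support ⊆ s) : houseLength G = ∑ u ∈ s, house ((G.coeff u : 𝓞 K) : K) := by
  refine Finset.sum_subset hs fun u _ hu => ?_
  rw [notMem_support_iff.1 hu]
  simp [house_zero]

theorem houseLength_zero : houseLength (0 : MvPolynomial (Fin d) (𝓞 K)) = 0 := by
  simp [houseLength]

theorem houseLength_add_le (G H : MvPolynomial (Fin d) (𝓞 K)) :
    houseLength (G + H) ≤ houseLength G + houseLength H := by
  classical
  rw [houseLength_eq_sum (support_add (p := G) (q := H)),
    houseLength_eq_sum (Finset.subset_union_left (s₁ := G.support) (s₂ := H.support)),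
    houseLength_eq_sum (Finset.subset_union_right (s₁ := G.support) (s₂ := H.support)),
    ← Finset.sum_add_distrib]
  refine Finset.sum_le_sum fun u _ => ?_
  rw [coeff_add]
  exact house_add_le _ _

theorem houseLength_sum_le {ι : Type*} (s : Finset ι) (G : ι → MvPolynomial (Fin d) (𝓞 K)) :
    houseLength (∑ i ∈ s, G i) ≤ ∑ i ∈ s, houseLength (G i) := by
  classical
  induction s using Finset.induction_on with
  | empty => simp [houseLength_zero]
  | insert a s ha ih =>
    rw [Finset.sum_insert ha, Finset.sum_insert ha]
    exact (houseLength_add_le _ _).trans (by gcongr)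

theorem houseLength_monomial (u : Fin d →₀ ℕ) (c : 𝓞 K) :
    houseLength (monomial u c) = house (c : K) := by
  classical
  rw [houseLength_eq_sum (s := {u}) support_monomial_subset]
  simp

theorem houseLength_mul_le (G H : MvPolynomial (Fin d) (𝓞 K)) :
    houseLength (G * H) ≤ houseLength G * houseLength H := by
  have : G * H = ∑ u ∈ G.support, ∑ w ∈ H.support,
      monomial (u + w) (G.coeff u * H.coeff w) := by
    conv_lhs => rw [G.as_sum, H.as_sum, Finset.sum_mul_sum]
    simp [monomial_mul]
  rw [this]
  refine (houseLength_sum_le _ _).trans ?_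
  rw [houseLength, houseLength, Finset.sum_mul_sum]
  refine Finset.sum_le_sum fun u _ => (houseLength_sum_le _ _).trans ?_
  refine Finset.sum_le_sum fun w _ => ?_
  rw [houseLength_monomial]
  exact house_mul_le _ _

/-- Effect of a derivation on the degree and the length. -/
theorem mkDerivation_bounds {p : Fin d → MvPolynomial (Fin d) (𝓞 K)} {δ : ℕ} {C : ℝ}
    (hC0 : 0 ≤ C) (hδ : ∀ i, (p i).totalDegree ≤ δ) (hC : ∀ i, houseLength (p i) ≤ C)
    {G : MvPolynomial (Fin d) (𝓞 K)} {m : ℕ} (hG : G.totalDegree ≤ m) :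
    (mkDerivation (𝓞 K) p G).totalDegree ≤ m + δ ∧
      houseLength (mkDerivation (𝓞 K) p G) ≤ C * m * houseLength G := by
  have hexp : mkDerivation (𝓞 K) p G = ∑ u ∈ G.support, ∑ i ∈ u.support,
      monomial (u - Finsupp.single i 1) (G.coeff u * (u i : 𝓞 K)) * p i := by
    conv_lhs => rw [G.as_sum, map_sum]
    refine Finset.sum_congr rfl fun u _ => ?_
    rw [mkDerivation_monomial, Finsupp.sum, Finset.smul_sum]
    refine Finset.sum_congr rfl fun i _ => ?_
    rw [smul_eq_mul, ← smul_mul_assoc, smul_monomial, smul_eq_mul]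
  rw [hexp]
  constructor
  · refine totalDegree_finsetSum_le fun u hu => totalDegree_finsetSum_le fun i _ => ?_
    refine (totalDegree_mul _ _).trans (add_le_add ?_ (hδ i))
    refine (totalDegree_monomial_le _ _).trans ?_
    refine le_trans ?_ ((le_totalDegree hu).trans hG)
    exact Finsupp.degree_mono tsub_le_self
  · refine (houseLength_sum_le _ _).trans ?_
    rw [houseLength, Finset.mul_sum]
    refine Finset.sum_le_sum fun u hu => (houseLength_sum_le _ _).trans ?_
    have hterm : ∀ i ∈ u.support, houseLength
        (monomial (u - Finsupp.single i 1) (G.coeff u * (u i : 𝓞 K)) * p i) ≤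
          (u i : ℝ) * (house ((G.coeff u : 𝓞 K) : K) * C) := by
      intro i _
      refine (houseLength_mul_le _ _).trans ?_
      have hcast : ((G.coeff u * (u i : 𝓞 K) : 𝓞 K) : K) = (u i : K) * (G.coeff u : 𝓞 K) := by
        rw [mul_comm]
        simp
      rw [houseLength_monomial, hcast, house_nat_mul, mul_assoc]
      have := hC i
      have := house_nonneg ((G.coeff u : 𝓞 K) : K)
      gcongr
    refine (Finset.sum_le_sum hterm).trans ?_
    rw [← Finset.sum_mul]
    have hdeg : ∑ i ∈ u.support, (u i : ℝ) ≤ m := by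
      exact_mod_cast (le_totalDegree hu).trans hG
    have := house_nonneg ((G.coeff u : 𝓞 K) : K)
    calc (∑ i ∈ u.support, (u i : ℝ)) * (house ((G.coeff u : 𝓞 K) : K) * C)
        ≤ m * (house ((G.coeff u : 𝓞 K) : K) * C) := by gcongr
      _ = _ := by ring

variable {n : ℕ}

/-- Iterated application of the derivations `∑ i, p ν i ∂/∂X_i` along a word in the `ν`. -/
noncomputable def iterDerivation (p : Fin n → Fin d → MvPolynomial (Fin d) (𝓞 K))
    (w : List (Fin n)) (G : MvPolynomial (Fin d) (𝓞 K)) : MvPolynomial (Fin d) (𝓞 K) :=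
  w.foldr (fun ν H => mkDerivation (𝓞 K) (p ν) H) G

theorem iterDerivation_bounds {p : Fin n → Fin d → MvPolynomial (Fin d) (𝓞 K)} {δ : ℕ} {C : ℝ}
    (hC0 : 0 ≤ C) (hδ : ∀ ν i, (p ν i).totalDegree ≤ δ) (hC : ∀ ν i, houseLength (p ν i) ≤ C)
    {G : MvPolynomial (Fin d) (𝓞 K)} {m : ℕ} (hG : G.totalDegree ≤ m) (w : List (Fin n)) :
    (iterDerivation p w G).totalDegree ≤ m + w.length * δ ∧
      houseLength (iterDerivation p w G) ≤
        (C * (m + w.length * δ : ℕ)) ^ w.length * houseLength G := by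
  induction w with
  | nil => simpa [iterDerivation] using hG
  | cons ν w ih =>
    obtain ⟨h1, h2⟩ := mkDerivation_bounds hC0 (hδ ν) (hC ν) ih.1
    refine ⟨h1.trans (le_of_eq (by simp only [List.length_cons]; ring)), h2.trans ?_⟩
    have hmono : (m + w.length * δ : ℕ) ≤ m + (ν :: w).length * δ := by
      simp only [List.length_cons]
      gcongr
      omega
    have hmono' : ((m + w.length * δ : ℕ) : ℝ) ≤ (m + (ν :: w).length * δ : ℕ) := by
      exact_mod_cast hmono
    have h0 := houseLength_nonneg G
    calc C * (m + w.length * δ : ℕ) * houseLength (iterDerivation p w G)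
        ≤ C * (m + (ν :: w).length * δ : ℕ) *
          ((C * (m + (ν :: w).length * δ : ℕ)) ^ w.length * houseLength G) := by
          refine mul_le_mul (by gcongr) (ih.2.trans (by gcongr)) (houseLength_nonneg _)
            (by positivity)
      _ = _ := by rw [List.length_cons, pow_succ]; ring

theorem exists_integer_eq_pow_mul_substFun {E : Type*} (φ : K →+* ℂ) (g : Fin d → E → ℂ) {t : E}
    {b : 𝓞 K} {a : Fin d → 𝓞 K} (ha : ∀ j, φ (a j) = φ b * g j t) {B : ℝ} (hB1 : 1 ≤ B)
    (hb : house (b : K) ≤ B) (haB : ∀ j, house (a j : K) ≤ B)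
    {G : MvPolynomial (Fin d) (𝓞 K)} {m : ℕ} (hG : G.totalDegree ≤ m) :
    ∃ γ : 𝓞 K, φ γ = φ b ^ m * substFun φ g G t ∧ house (γ : K) ≤ B ^ m * houseLength G := by
  have hdeg : ∀ u ∈ G.support, ∑ j, u j ≤ m := fun u hu => by
    have := (le_totalDegree hu).trans hG
    rwa [Finsupp.sum_fintype _ _ (fun _ => rfl)] at this
  refine ⟨∑ u ∈ G.support, G.coeff u * ((∏ j, a j ^ u j) * b ^ (m - ∑ j, u j)), ?_, ?_⟩
  · rw [substFun, eval₂_eq', Finset.mul_sum]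
    have : ∀ x : 𝓞 K, φ (x : K) = (φ.comp (algebraMap (𝓞 K) K)) x := fun _ => rfl
    simp only [this] at ha ⊢
    rw [map_sum]
    refine Finset.sum_congr rfl fun u hu => ?_
    simp only [map_mul, map_prod, map_pow, ha, mul_pow, Finset.prod_mul_distrib,
      Finset.prod_pow_eq_pow_sum]
    rw [← Nat.add_sub_cancel' (hdeg u hu), pow_add]
    simp only [add_tsub_cancel_left]
    ring
  · have hsum : ((∑ u ∈ G.support, G.coeff u * ((∏ j, a j ^ u j) * b ^ (m - ∑ j, u j)) : 𝓞 K) : K)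
        = ∑ u ∈ G.support, ((G.coeff u : 𝓞 K) : K) *
          ((∏ j, (a j : K) ^ u j) * (b : K) ^ (m - ∑ j, u j)) := by
      simp
    rw [hsum, houseLength, Finset.mul_sum]
    refine (house_sum_le_sum_house _ _).trans (Finset.sum_le_sum fun u hu => ?_)
    have hprod : ∀ s : Finset (Fin d), house (∏ j ∈ s, (a j : K) ^ u j) ≤ B ^ ∑ j ∈ s, u j := by
      intro s
      induction s using Finset.induction_on with
      | empty => simp [house_one]
      | insert j s hj ih =>
        rw [Finset.prod_insert hj, Finset.sum_insert hj, pow_add]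
        refine (house_mul_le _ _).trans (mul_le_mul ?_ ih (house_nonneg _) (by positivity))
        exact (house_pow_le _ _).trans (pow_le_pow_left₀ (house_nonneg _) (haB j) _)
    calc house (((G.coeff u : 𝓞 K) : K) * ((∏ j, (a j : K) ^ u j) * (b : K) ^ (m - ∑ j, u j)))
        ≤ house ((G.coeff u : 𝓞 K) : K) *
          (house (∏ j, (a j : K) ^ u j) * house ((b : K) ^ (m - ∑ j, u j))) :=
          (house_mul_le _ _).trans
            (mul_le_mul_of_nonneg_left (house_mul_le _ _) (house_nonneg _))
      _ ≤ house ((G.coeff u : 𝓞 K) : K) * (B ^ (∑ j, u j) * B ^ (m - ∑ j, u j)) := by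
          refine mul_le_mul_of_nonneg_left (mul_le_mul (hprod _) ?_ (house_nonneg _)
            (by positivity)) (house_nonneg _)
          exact (house_pow_le _ _).trans (pow_le_pow_left₀ (house_nonneg _) hb _)
      _ = B ^ m * house ((G.coeff u : 𝓞 K) : K) := by
          rw [← pow_add, Nat.add_sub_cancel' (hdeg u hu), mul_comm]

end Heights

section Smoothness

open NumberField MvPolynomial

variable {K : Type*} [Field K] {d n : ℕ} {E : Type*} [NormedAddCommGroup E] [NormedSpace ℂ E]

theorem contDiff_substFun (φ : K →+* ℂ) {g : Fin d → E → ℂ} {k : WithTop ℕ∞}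
    (hg : ∀ j, ContDiff ℂ k (g j)) (G : MvPolynomial (Fin d) (𝓞 K)) :
    ContDiff ℂ k (substFun φ g G) := by
  induction G using MvPolynomial.induction_on with
  | C a =>
    rw [substFun_C]
    exact contDiff_const
  | add P Q hP hQ =>
    rw [substFun_add]
    exact ContDiff.add hP hQ
  | mul_X P i hP =>
    rw [substFun_mul_X]
    exact hP.mul (hg i)

theorem dirDeriv_substFun (φ : K →+* ℂ) {g : Fin d → E → ℂ} (hg : ∀ j, ContDiff ℂ ∞ (g j))
    {p : Fin d → MvPolynomial (Fin d) (𝓞 K)} {v : E}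
    (hp : ∀ i, dirDeriv v (g i) = substFun φ g (p i)) (G : MvPolynomial (Fin d) (𝓞 K)) :
    dirDeriv v (substFun φ g G) = substFun φ g (mkDerivation (𝓞 K) p G) := by
  induction G using MvPolynomial.induction_on with
  | C a =>
    funext t
    rw [substFun_C]
    simp [substFun, dirDeriv]
  | add P Q hP hQ =>
    rw [substFun_add, dirDeriv_add (contDiff_substFun φ hg P) (contDiff_substFun φ hg Q), hP, hQ,
      map_add, substFun_add]
  | mul_X P i hP =>
    funext t
    have h1 := congrFun hP t
    have h2 := congrFun (hp i) t
    rw [substFun_mul_X]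
    simp only [dirDeriv] at h1 h2 ⊢
    rw [fderiv_fun_mul ((contDiff_substFun φ hg P).differentiable_of_infty t)
      ((hg i).differentiable_of_infty t)]
    simp only [_root_.add_apply, _root_.smul_apply, h1, h2,
      Derivation.leibniz, mkDerivation_X]
    simp [substFun]

theorem iterDirDeriv_substFun (φ : K →+* ℂ) {g : Fin d → E → ℂ} (hg : ∀ j, ContDiff ℂ ∞ (g j))
    {p : Fin n → Fin d → MvPolynomial (Fin d) (𝓞 K)} {v : Fin n → E}
    (hp : ∀ ν i, dirDeriv (v ν) (g i) = substFun φ g (p ν i)) (G : MvPolynomial (Fin d) (𝓞 K))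
    (w : List (Fin n)) :
    iterDirDeriv (w.map v) (substFun φ g G) = substFun φ g (iterDerivation p w G) := by
  induction w with
  | nil => rfl
  | cons ν w ih =>
    rw [List.map_cons, iterDirDeriv_cons, ih]
    exact dirDeriv_substFun φ hg (hp ν) _

/-- Solutions of a polynomial system of differential equations are smooth. -/
theorem contDiff_of_dirDeriv_eq_substFun [FiniteDimensional ℂ E] (φ : K →+* ℂ)
    {g : Fin d → E → ℂ} (hg : ∀ j, Differentiable ℂ (g j))
    {p : Fin n → Fin d → MvPolynomial (Fin d) (𝓞 K)} (v : Module.Basis (Fin n) ℂ E)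
    (hp : ∀ ν i, dirDeriv (v ν) (g i) = substFun φ g (p ν i)) (j : Fin d) :
    ContDiff ℂ ∞ (g j) := by
  rw [contDiff_infty]
  intro k
  induction k generalizing j with
  | zero => exact contDiff_zero.2 (hg j).continuous
  | succ k ih =>
    push_cast
    rw [contDiff_succ_iff_fderiv_apply]
    refine ⟨hg j, by simp, fun y => ?_⟩
    have : (fun x => fderiv ℂ (g j) x y) =
        fun x => ∑ ν, v.repr y ν * substFun φ g (p ν j) x := by
      funext x
      conv_lhs => rw [← v.sum_repr y]
      simp only [map_sum, map_smul, smul_eq_mul, ← hp]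
      rfl
    rw [this]
    exact ContDiff.sum fun ν _ => contDiff_const.mul (contDiff_substFun φ ih _)

end Smoothness

/-! ### Construction of the auxiliary function and extrapolation -/

section AuxiliaryFunction

open NumberField MvPolynomial

variable {K : Type*} [Field K] [NumberField K] {d n : ℕ}

theorem norm_substFun_le {E : Type*} (φ : K →+* ℂ) {g : Fin d → E → ℂ} {t : E} {Y : ℝ}
    (hY1 : 1 ≤ Y) (hY : ∀ j, ‖g j t‖ ≤ Y) {G : MvPolynomial (Fin d) (𝓞 K)} {m : ℕ}
    (hG : G.totalDegree ≤ m) : ‖substFun φ g G t‖ ≤ houseLength G * Y ^ m := by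
  rw [substFun, eval₂_eq', houseLength, Finset.sum_mul]
  refine (norm_sum_le _ _).trans (Finset.sum_le_sum fun u hu => ?_)
  have hdeg : ∑ j, u j ≤ m := by
    have := (le_totalDegree hu).trans hG
    rwa [Finsupp.sum_fintype _ _ (fun _ => rfl)] at this
  rw [norm_mul, norm_prod]
  have h1 : ‖(φ.comp (algebraMap (𝓞 K) K)) (G.coeff u)‖ ≤ house ((G.coeff u : 𝓞 K) : K) :=
    norm_embedding_le_house _ _
  have h2 : ∏ j, ‖g j t ^ u j‖ ≤ Y ^ m := by
    calc ∏ j, ‖g j t ^ u j‖ ≤ ∏ j, Y ^ u j := by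
          refine Finset.prod_le_prod (fun _ _ => norm_nonneg _) fun j _ => ?_
          rw [norm_pow]
          exact pow_le_pow_left₀ (norm_nonneg _) (hY j) _
      _ = Y ^ ∑ j, u j := Finset.prod_pow_eq_pow_sum _ _ _
      _ ≤ Y ^ m := pow_le_pow_right₀ hY1 hdeg
  exact mul_le_mul h1 h2 (Finset.prod_nonneg fun _ _ => norm_nonneg _) (house_nonneg _)

theorem exists_common_denominator {ι : Type*} [Finite ι] (φ : K →+* ℂ) (x : ι → Fin d → ℂ)
    (hx : ∀ s j, ∃ y : K, φ y = x s j) :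
    ∃ (b : 𝓞 K) (a : ι → Fin d → 𝓞 K) (B : ℝ), b ≠ 0 ∧ 1 ≤ B ∧ house (b : K) ≤ B ∧
      (∀ s j, house (a s j : K) ≤ B) ∧ ∀ s j, φ (a s j) = φ b * x s j := by
  have := Fintype.ofFinite ι
  choose y hy using hx
  obtain ⟨b, hb⟩ := IsLocalization.exist_integer_multiples_of_finite (nonZeroDivisors (𝓞 K))
    (fun q : ι × Fin d => y q.1 q.2)
  choose a ha using hb
  refine ⟨b, fun s j => a (s, j), 1 + house ((b : 𝓞 K) : K) + ∑ q, house ((a q : 𝓞 K) : K),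
    nonZeroDivisors.coe_ne_zero b, ?_, ?_, fun s j => ?_, fun s j => ?_⟩
  · have := house_nonneg ((b : 𝓞 K) : K)
    have := Finset.sum_nonneg fun q (_ : q ∈ Finset.univ) => house_nonneg ((a q : 𝓞 K) : K)
    linarith
  · have := Finset.sum_nonneg fun q (_ : q ∈ Finset.univ) => house_nonneg ((a q : 𝓞 K) : K)
    linarith
  · have := house_nonneg ((b : 𝓞 K) : K)
    have := Finset.single_le_sum (fun q _ => house_nonneg ((a q : 𝓞 K) : K))
      (Finset.mem_univ (s, j))
    linarith
  · have := ha (s, j)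
    rw [← hy, ← map_mul]
    congr 1

/-- A word with prescribed numbers of occurrences of the letters. -/
noncomputable def wordOfCounts (k : Fin n → ℕ) : List (Fin n) :=
  (∑ ν, k ν • ({ν} : Multiset (Fin n))).toList

theorem perm_wordOfCounts (w : List (Fin n)) : w.Perm (wordOfCounts fun ν => w.count ν) := by
  rw [← Multiset.coe_eq_coe, wordOfCounts, Multiset.coe_toList]
  ext ν
  simp [Multiset.count_sum', Multiset.count_singleton]

theorem length_wordOfCounts (k : Fin n → ℕ) : (wordOfCounts k).length = ∑ ν, k ν := by
  simp [wordOfCounts]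

/-- Construction of the auxiliary polynomial. -/
theorem exists_auxiliary_polynomial {ι : Type} [Fintype ι] [Nonempty ι] {c : ℝ}
    (hc : ∀ (α β : Type) [Fintype α] [Fintype β] (a : Matrix α β (𝓞 K)) (A : ℝ),
      1 ≤ A → 0 < Fintype.card α → 2 * Fintype.card α ≤ Fintype.card β →
      (∀ k l, house (a k l : K) ≤ A) →
      ∃ ξ : β → 𝓞 K, ξ ≠ 0 ∧ a.mulVec ξ = 0 ∧
        ∀ l, house (ξ l : K) ≤ c * (c * Fintype.card β * A))
    {E : Type*} (φ : K →+* ℂ) (g : Fin d → E → ℂ)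
    {p : Fin n → Fin d → MvPolynomial (Fin d) (𝓞 K)} {δ : ℕ} {C : ℝ}
    (hC1 : 1 ≤ C) (hδ : ∀ ν i, (p ν i).totalDegree ≤ δ) (hC : ∀ ν i, houseLength (p ν i) ≤ C)
    {pt : ι → E} {b : 𝓞 K} (hb0 : b ≠ 0) {a : ι → Fin d → 𝓞 K} {B : ℝ} (hB1 : 1 ≤ B)
    (hb : house (b : K) ≤ B) (haB : ∀ s j, house (a s j : K) ≤ B)
    (ha : ∀ s j, φ (a s j) = φ b * g j (pt s)) {T L : ℕ} (hT : 0 < T) (hLT : L ≤ T)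
    (hcard : 2 * (Fintype.card ι * T ^ n) ≤ L ^ d) (hd : 0 < d) :
    ∃ G : MvPolynomial (Fin d) (𝓞 K), G ≠ 0 ∧ G.totalDegree ≤ d * L ∧
      houseLength G ≤ L ^ d * (c * (c * L ^ d *
        (B ^ ((d + n * δ) * T) * (C * ((d + n * δ) * T : ℕ)) ^ (n * T)))) ∧
      ∀ (k : Fin n → Fin T) (s : ι),
        substFun φ g (iterDerivation p (wordOfCounts fun ν => (k ν : ℕ)) G) (pt s) = 0 := by
  classical
  set e := d + n * δ with he
  let mon : (Fin d → Fin L) → (Fin d →₀ ℕ) :=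
    fun u => Finsupp.equivFunOnFinite.symm fun i => (u i : ℕ)
  have hmon_inj : Function.Injective mon := by
    intro u u' h
    funext i
    have := DFunLike.congr_fun h i
    exact Fin.ext (by simpa [mon] using this)
  have hmon_deg : ∀ (u) (x : 𝓞 K), (monomial (mon u) x).totalDegree ≤ d * L := by
    intro u x
    refine (totalDegree_monomial_le _ _).trans ?_
    rw [Finsupp.sum_fintype _ _ (fun _ => rfl)]
    calc ∑ i, (mon u) i ≤ ∑ _i : Fin d, L := Finset.sum_le_sum fun i _ => (u i).isLt.le
      _ = d * L := by simp
  have hlen : ∀ k : Fin n → Fin T, (wordOfCounts fun ν => (k ν : ℕ)).length ≤ n * T := by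
    intro k
    rw [length_wordOfCounts]
    calc ∑ ν, (k ν : ℕ) ≤ ∑ _ν : Fin n, T := Finset.sum_le_sum fun i _ => (k i).isLt.le
      _ = n * T := by simp
  have hdegle : ∀ k : Fin n → Fin T,
      d * L + (wordOfCounts fun ν => (k ν : ℕ)).length * δ ≤ e * T := by
    intro k
    calc _ ≤ d * T + (n * T) * δ := by gcongr; exact hlen k
      _ = _ := by rw [he]; ring
  have heT : 1 ≤ e * T := Nat.mul_pos (by omega) hT
  have hbase : 1 ≤ C * ((e * T : ℕ) : ℝ) :=
    one_le_mul_of_one_le_of_one_le hC1 (by exact_mod_cast heT)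
  set A := B ^ (e * T) * (C * (e * T : ℕ)) ^ (n * T) with hA
  have hA1 : 1 ≤ A :=
    one_le_mul_of_one_le_of_one_le (one_le_pow₀ hB1) (one_le_pow₀ hbase)
  have hentry : ∀ (q : ι × (Fin n → Fin T)) (u : Fin d → Fin L), ∃ γ : 𝓞 K,
      φ γ = φ b ^ (e * T) * substFun φ g
        (iterDerivation p (wordOfCounts fun ν => (q.2 ν : ℕ)) (monomial (mon u) 1)) (pt q.1) ∧
      house (γ : K) ≤ A := by
    rintro ⟨s, k⟩ u
    obtain ⟨h1, h2⟩ := iterDerivation_bounds (zero_le_one.trans hC1) hδ hC (hmon_deg u 1)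
      (wordOfCounts fun ν => (k ν : ℕ))
    obtain ⟨γ, hγ, hγ'⟩ := exists_integer_eq_pow_mul_substFun φ g (ha s) hB1 hb (haB s)
      (h1.trans (hdegle k))
    refine ⟨γ, hγ, hγ'.trans ?_⟩
    rw [hA]
    gcongr
    refine h2.trans ?_
    have h3 : houseLength (monomial (mon u) (1 : 𝓞 K)) = 1 := by
      rw [houseLength_monomial]
      simp [house_one]
    rw [h3, mul_one]
    calc _ ≤ (C * (e * T : ℕ)) ^ (wordOfCounts fun ν => (k ν : ℕ)).length := by
          have : ((d * L + (wordOfCounts fun ν => (k ν : ℕ)).length * δ : ℕ) : ℝ) ≤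
              (e * T : ℕ) := by exact_mod_cast hdegle k
          gcongr
      _ ≤ _ := pow_le_pow_right₀ hbase (hlen k)
  choose γ hγ hγA using hentry
  obtain ⟨ξ, hξ0, hξ, hξle⟩ := hc (ι × (Fin n → Fin T)) (Fin d → Fin L) (Matrix.of γ) A hA1
    (by
      have : Nonempty (Fin T) := ⟨⟨0, hT⟩⟩
      exact Fintype.card_pos)
    (by simpa using hcard) hγA
  have hcardβ : (Fintype.card (Fin d → Fin L) : ℝ) = L ^ d := by simp
  rw [hcardβ] at hξle
  have hcoeff : ∀ u, coeff (mon u) (∑ u', monomial (mon u') (ξ u')) = ξ u := by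
    intro u
    rw [coeff_sum]
    simp [coeff_monomial, hmon_inj.eq_iff]
  refine ⟨∑ u, monomial (mon u) (ξ u), ?_, ?_, ?_, fun k s => ?_⟩
  · intro h0
    apply hξ0
    funext u
    rw [← hcoeff u, h0]
    simp
  · exact totalDegree_finsetSum_le fun u _ => hmon_deg u _
  · refine (houseLength_sum_le _ _).trans ?_
    calc _ ≤ ∑ _u : Fin d → Fin L, c * (c * L ^ d * A) := by
          refine Finset.sum_le_sum fun u _ => ?_
          rw [houseLength_monomial]
          exact hξle u
      _ = _ := by rw [Finset.sum_const, Finset.card_univ, nsmul_eq_mul, hcardβ]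
  · have hlin : ∀ (w : List (Fin n)) (ζ : (Fin d → Fin L) → 𝓞 K),
        iterDerivation p w (∑ u, monomial (mon u) (ζ u)) =
          ∑ u, ζ u • iterDerivation p w (monomial (mon u) 1) := by
      intro w ζ
      induction w with
      | nil => simp [iterDerivation, smul_monomial]
      | cons ν w ih =>
        simp only [iterDerivation, List.foldr_cons] at ih ⊢
        rw [ih, map_sum]
        simp
    have hrow := congrArg (fun x : 𝓞 K => φ (x : K)) (congrFun hξ (s, k))
    have hcomp : ∀ x : 𝓞 K, φ (x : K) = (φ.comp (algebraMap (𝓞 K) K)) x := fun _ => rfl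
    simp only [Matrix.mulVec, dotProduct, Matrix.of_apply, Pi.zero_apply, hcomp, map_sum, map_mul,
      map_zero] at hrow
    have hb0' : (φ.comp (algebraMap (𝓞 K) K)) b ≠ 0 := by
      simpa using hb0
    refine (mul_eq_zero.1 (?_ : (φ.comp (algebraMap (𝓞 K) K)) b ^ (e * T) * _ = 0)).resolve_left
      (pow_ne_zero _ hb0')
    rw [← hrow, hlin, substFun, eval₂_sum, Finset.mul_sum]
    refine Finset.sum_congr rfl fun u _ => ?_
    have := hγ (s, k) u
    rw [hcomp, hcomp] at this
    rw [this, smul_eq_C_mul, eval₂_mul, eval₂_C, substFun]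
    ring

end AuxiliaryFunction

section Extrapolation

/-- The smallest order of a nonzero derivative at a given family of points. -/
theorem exists_minimal_word {E ι κ : Type*} [NormedAddCommGroup E] [NormedSpace ℂ E]
    {v : ι → E} (hv : Submodule.span ℂ (Set.range v) = ⊤) {F : E → ℂ} (hF : ContDiff ℂ ∞ F)
    (hF0 : ∃ t, F t ≠ 0) {pt : κ → E} (hpt : ∃ s, pt s = 0) :
    ∃ X : ℕ, (∀ s (w : List ι), w.length < X → iterDirDeriv (w.map v) F (pt s) = 0) ∧
      ∃ s, ∃ w : List ι, w.length = X ∧ iterDirDeriv (w.map v) F (pt s) ≠ 0 := by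
  classical
  have hex : ∃ X : ℕ, ∃ s, ∃ w : List ι, w.length = X ∧ iterDirDeriv (w.map v) F (pt s) ≠ 0 := by
    by_contra hcon
    push Not at hcon
    obtain ⟨t, ht⟩ := hF0
    obtain ⟨s, hs⟩ := hpt
    refine ht (eq_zero_of_iterDirDeriv_eq_zero hF (fun l => ?_) t)
    refine iterDirDeriv_eq_zero_of_span hv hF (M := l.length + 1) (fun w _ => ?_) l (by omega)
    rw [← hs]
    exact hcon _ s w rfl
  refine ⟨Nat.find hex, fun s w hw => ?_, Nat.find_spec hex⟩
  by_contra h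
  exact Nat.find_min hex hw ⟨s, w, rfl, h⟩

theorem norm_iterDirDeriv_le_of_vanish_on_grid {n S X T : ℕ} {v : Fin n → Fin n → ℂ}
    (hv : Submodule.span ℂ (Set.range v) = ⊤) {V R M : ℝ} (hV0 : 0 < V) (hV : ∀ ν, ‖v ν‖ ≤ V)
    (hX : 1 ≤ X) (hT : n * T < X) (hR : 5 * ((S : ℝ) + 1) ≤ R)
    {F : (Fin n → ℂ) → ℂ} (hF : ContDiff ℂ ∞ F) (hM : ∀ t, ‖t‖ ≤ R → ‖F t‖ ≤ M)
    (hvan : ∀ (s : Fin n → Fin S) (w : List (Fin n)), w.length < X →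
      iterDirDeriv (w.map v) F (fun i => ((s i : ℕ) : ℂ)) = 0)
    (s : Fin n → Fin S) (w : List (Fin n)) (hw : w.length = X) :
    ‖iterDirDeriv (w.map v) F (fun i => ((s i : ℕ) : ℂ))‖ ≤
      (V * X) ^ X * (2 ^ n * ((5 * ((S : ℝ) + 1) / R) ^ (S * T) * M)) := by
  have hS0 : (0 : ℝ) ≤ S := Nat.cast_nonneg _
  have hX0 : (0 : ℝ) < X := by exact_mod_cast hX
  set r : ℝ := S + 1 with hr
  have hM0 : 0 ≤ M := (norm_nonneg _).trans (hM 0 (by rw [norm_zero]; linarith))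
  have hfrac : 4 * r / (R - r) ≤ 5 * r / R := by
    rw [div_le_div_iff₀ (by linarith) (by linarith)]
    nlinarith
  have hfrac0 : 0 ≤ 4 * r / (R - r) := div_nonneg (by linarith) (by linarith)
  have hfrac1 : 4 * r / (R - r) ≤ 1 := by
    rw [div_le_one (by linarith)]
    linarith
  have hmax : ∀ z : Fin n → ℂ, ‖z‖ ≤ r → ‖F z‖ ≤ 2 ^ n * ((5 * r / R) ^ (S * T) * M) := by
    intro z hz
    refine (norm_le_of_vanish_on_grid (T := T) (by linarith : (S : ℝ) ≤ r) (by linarith : r < R)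
      hfrac1 hz hF hM fun s l hl => ?_).trans ?_
    · exact iterDirDeriv_eq_zero_of_span hv hF (hvan s) l (by omega)
    · gcongr
  have hs : ‖(fun i => ((s i : ℕ) : ℂ))‖ ≤ (S : ℝ) := by
    rw [pi_norm_le_iff_of_nonneg hS0]
    intro i
    rw [Complex.norm_natCast]
    exact_mod_cast (s i).isLt.le
  have := norm_iterDirDeriv_le hF (p := fun i => ((s i : ℕ) : ℂ)) (a := 0)
    (z := fun i => ((s i : ℕ) : ℂ)) hV0 (inv_pos.2 hX0) (w.map v)
    (by
      intro x hx
      obtain ⟨ν, -, rfl⟩ := List.mem_map.1 hx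
      exact hV ν)
    (M := 2 ^ n * ((5 * r / R) ^ (S * T) * M))
    (by
      intro z hz
      refine hmax z ?_
      rw [List.length_map, hw, mul_inv_cancel₀ hX0.ne', zero_add] at hz
      calc ‖z‖ = ‖(z - fun i => ((s i : ℕ) : ℂ)) + fun i => ((s i : ℕ) : ℂ)‖ := by
            rw [sub_add_cancel]
        _ ≤ 1 + S := (norm_add_le _ _).trans (add_le_add hz hs)
        _ = r := by rw [hr, add_comm])
    (by simp)
  rwa [List.length_map, hw, div_inv_eq_mul] at this

end Extrapolation

section Estimates

theorem auxiliary_length_bound {d n e L T X : ℕ} {c C B : ℝ} (hc : 1 ≤ c) (hC : 1 ≤ C)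
    (hB : 1 ≤ B) (he : 1 ≤ e) (hLX : L ≤ X) (hT : 1 ≤ T) (hTX : T ≤ X) :
    (L : ℝ) ^ d * (c * (c * L ^ d * (B ^ (e * T) * (C * (e * T : ℕ)) ^ (n * T)))) ≤
      (4 ^ d * c ^ 2 * B ^ e * (C * e) ^ n * X ^ n) ^ X := by
  have hX1 : 1 ≤ X := hT.trans hTX
  have hLX' : (L : ℝ) ≤ X := by exact_mod_cast hLX
  have hX2 : (X : ℝ) ≤ 2 ^ X := by exact_mod_cast Nat.lt_two_pow_self.le
  have he' : (1 : ℝ) ≤ e := by exact_mod_cast he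
  have hXr : (1 : ℝ) ≤ X := by exact_mod_cast hX1
  have hTX' : (T : ℝ) ≤ X := by exact_mod_cast hTX
  have h1 : (L : ℝ) ^ d ≤ (2 ^ X) ^ d := by gcongr; exact hLX'.trans hX2
  have h2 : c ^ 2 ≤ (c ^ 2) ^ X := le_self_pow₀ (one_le_pow₀ hc) (by omega)
  have h3 : B ^ (e * T) ≤ B ^ (e * X) := pow_le_pow_right₀ hB (by gcongr)
  have h4 : (C * (e * T : ℕ)) ^ (n * T) ≤ (C * e * X) ^ (n * X) := by
    have hb : 1 ≤ C * e * X :=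
      one_le_mul_of_one_le_of_one_le (one_le_mul_of_one_le_of_one_le hC he') hXr
    calc (C * (e * T : ℕ)) ^ (n * T) ≤ (C * e * X) ^ (n * T) := by
          push_cast
          rw [← mul_assoc]
          gcongr
      _ ≤ _ := pow_le_pow_right₀ hb (by gcongr)
  calc (L : ℝ) ^ d * (c * (c * L ^ d * (B ^ (e * T) * (C * (e * T : ℕ)) ^ (n * T))))
      = (L : ℝ) ^ d * (L : ℝ) ^ d * c ^ 2 * (B ^ (e * T) * (C * (e * T : ℕ)) ^ (n * T)) := by ring
    _ ≤ (2 ^ X) ^ d * (2 ^ X) ^ d * (c ^ 2) ^ X * (B ^ (e * X) * (C * e * X) ^ (n * X)) := by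
        gcongr
    _ = _ := by
        have : ((2 : ℝ) ^ X) ^ d * (2 ^ X) ^ d = (4 ^ d) ^ X := by
          rw [← mul_pow, ← mul_pow, ← pow_mul, ← pow_mul, mul_comm d X]
          norm_num
        rw [this]
        simp only [mul_pow, ← pow_mul, mul_assoc]

theorem le_of_one_le_mul_div_pow {X k S T D E : ℕ} {R q C₂ C₃ : ℝ} (hX : 1 ≤ X) (hTX : T ≤ X)
    (hR : 0 < R) (hR1 : 1 ≤ R) (hq : 1 ≤ q) (hC₂ : 0 ≤ C₂) (hC₃ : 0 ≤ C₃) (hD : 1 ≤ D)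
    (hE : (X : ℝ) ^ (k * D) = R ^ E) (hST : (E + 1) * X ≤ S * T)
    (h : 1 ≤ (C₃ * X ^ k) ^ X * (q / R) ^ (S * T) * ((C₂ * X ^ k) ^ X) ^ (D - 1)) :
    R ≤ q ^ S * C₃ * C₂ ^ (D - 1) := by
  have hRp : 0 < R ^ (S * T) := by positivity
  have h1 : R ^ (S * T) ≤ (q ^ S * C₃ * C₂ ^ (D - 1)) ^ X * (R ^ E) ^ X := by
    calc R ^ (S * T) = 1 * R ^ (S * T) := (one_mul _).symm
      _ ≤ ((C₃ * X ^ k) ^ X * (q / R) ^ (S * T) * ((C₂ * X ^ k) ^ X) ^ (D - 1)) *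
          R ^ (S * T) := by gcongr
      _ = q ^ (S * T) * ((C₃ * C₂ ^ (D - 1)) ^ X * (((X : ℝ) ^ k) ^ (D - 1 + 1)) ^ X) := by
          rw [div_pow]
          field_simp
          rw [pow_right_comm _ X (D - 1)]
          simp only [mul_pow, pow_succ]
          ring
      _ ≤ q ^ (S * X) * ((C₃ * C₂ ^ (D - 1)) ^ X * (((X : ℝ) ^ k) ^ (D - 1 + 1)) ^ X) := by
          have : q ^ (S * T) ≤ q ^ (S * X) := pow_le_pow_right₀ hq (by gcongr)
          gcongr
      _ = _ := by
          rw [Nat.sub_add_cancel hD, ← pow_mul (X : ℝ) k D, hE, pow_mul, mul_pow, mul_pow, mul_pow]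
          ring
  have h2 : R ^ X * (R ^ E) ^ X ≤ (q ^ S * C₃ * C₂ ^ (D - 1)) ^ X * (R ^ E) ^ X := by
    refine le_trans ?_ h1
    calc R ^ X * (R ^ E) ^ X = R ^ ((E + 1) * X) := by rw [← mul_pow, ← pow_succ', ← pow_mul]
      _ ≤ _ := pow_le_pow_right₀ hR1 hST
  have h3 := le_of_mul_le_mul_right h2 (by positivity)
  exact le_of_pow_le_pow_left₀ (by omega) (by positivity) h3

end Estimates

section Core

open NumberField MvPolynomial

/-- The Schneider–Lang criterion in normalised form: the functions take values in `K` at the points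
of `ℕ ^ n`, and satisfy differential equations with coefficients integral over `ℤ` with respect to
some basis of directions. -/
theorem false_of_values_mem_numberField {K : Type*} [Field K] [NumberField K] {d n : ℕ}
    (hn : 1 ≤ n) (hnd : n < d) (φ : K →+* ℂ) {g : Fin d → (Fin n → ℂ) → ℂ}
    (hg : ∀ j, Differentiable ℂ (g j)) {A : ℝ} (hA : 0 ≤ A) {m : ℕ} (hm : 1 ≤ m)
    (hgrow : ∀ j t (R : ℝ), 1 ≤ R → ‖t‖ ≤ R → ‖g j t‖ ≤ Real.exp (A * R ^ m))
    (v : Module.Basis (Fin n) ℂ (Fin n → ℂ))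
    {p : Fin n → Fin d → MvPolynomial (Fin d) (𝓞 K)}
    (hp : ∀ ν i, dirDeriv (v ν) (g i) = substFun φ g (p ν i))
    (hindep : ∀ G : MvPolynomial (Fin d) (𝓞 K), (∀ t, substFun φ g G t = 0) → G = 0)
    (hval : ∀ j (s : Fin n → ℕ), ∃ x : K, φ x = g j (fun i => (s i : ℂ))) : False := by
  have hgs : ∀ j, ContDiff ℂ ∞ (g j) := contDiff_of_dirDeriv_eq_substFun φ hg v hp
  obtain ⟨c, hc1, hc⟩ := exists_siegel_constant K
  -- bounds for the differential equations
  obtain ⟨δ, hδ⟩ : ∃ δ : ℕ, ∀ ν i, (p ν i).totalDegree ≤ δ :=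
    ⟨∑ q : Fin n × Fin d, (p q.1 q.2).totalDegree, fun ν i =>
      Finset.single_le_sum (f := fun q : Fin n × Fin d => (p q.1 q.2).totalDegree)
        (fun _ _ => Nat.zero_le _) (Finset.mem_univ (ν, i))⟩
  obtain ⟨C, hC1, hC⟩ : ∃ C : ℝ, 1 ≤ C ∧ ∀ ν i, houseLength (p ν i) ≤ C := by
    have h0 : ∀ q ∈ Finset.univ, 0 ≤ houseLength (p (q : Fin n × Fin d).1 q.2) :=
      fun _ _ => houseLength_nonneg _
    refine ⟨1 + ∑ q : Fin n × Fin d, houseLength (p q.1 q.2), ?_, fun ν i => ?_⟩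
    · have := Finset.sum_nonneg h0
      linarith
    · have := Finset.single_le_sum h0 (Finset.mem_univ (ν, i))
      simp only at this
      linarith
  obtain ⟨V, hV1, hV⟩ : ∃ V : ℝ, 1 ≤ V ∧ ∀ ν, ‖v ν‖ ≤ V := by
    refine ⟨1 + ∑ ν, ‖v ν‖, ?_, fun ν => ?_⟩
    · have := Finset.sum_nonneg fun ν (_ : ν ∈ Finset.univ) => norm_nonneg (v ν)
      linarith
    · have := Finset.single_le_sum (fun ν _ => norm_nonneg (v ν)) (Finset.mem_univ ν)
      linarith
  -- parameters
  set D := Module.finrank ℚ K with hDdef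
  have hD : 1 ≤ D := Module.finrank_pos
  set k := n + 1 with hk
  set E := m * k * (k * D) with hE
  set S := 2 * n * (E + 1) with hS
  have hS1 : 1 ≤ S := Nat.mul_pos (by omega) (by omega)
  have hS1' : (1 : ℝ) ≤ S := by exact_mod_cast hS1
  let pt : (Fin n → Fin S) → (Fin n → ℂ) := fun s i => ((s i : ℕ) : ℂ)
  have : Nonempty (Fin n → Fin S) := ⟨fun _ => ⟨0, hS1⟩⟩
  obtain ⟨b, a, B, hb0, hB1, hbB, haB, ha⟩ := exists_common_denominator φ
    (fun (s : Fin n → Fin S) j => g j (pt s)) (fun s j => hval j fun i => (s i : ℕ))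
  set e := d + n * δ with he
  have he1 : 1 ≤ e := by omega
  have he1' : (1 : ℝ) ≤ e := by exact_mod_cast he1
  set C₁ : ℝ := 4 ^ d * c ^ 2 * B ^ e * (C * e) ^ n with hC₁
  set C₂ : ℝ := B ^ e * (C * e) * C₁ with hC₂
  set C₃ : ℝ := B ^ e * V * 2 ^ n * C₁ * Real.exp (A * (d * (2 * S))) with hC₃
  have hC₁0 : 0 ≤ C₁ := by positivity
  have hC₂0 : 0 ≤ C₂ := by positivity
  have hC₃0 : 0 ≤ C₃ := by positivity
  set q : ℝ := 5 * ((S : ℝ) + 1) with hq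
  have hq1 : 1 ≤ q := by rw [hq]; linarith
  obtain ⟨N₀, hN₀⟩ := exists_nat_gt ((max q (q ^ S * C₃ * C₂ ^ (D - 1))) ^ (m * k))
  set N := N₀ + 2 * S + 2 * n with hN
  have hN1 : 1 ≤ N := by omega
  set T := N ^ k with hT
  set L := 2 * S * N ^ n with hL
  have hNT : N ≤ T := Nat.le_self_pow (by omega) N
  have hT1 : 1 ≤ T := hN1.trans hNT
  have hLT : L ≤ T := by
    rw [hL, hT, hk, pow_succ']
    gcongr
    omega
  have hL1 : 1 ≤ L := Nat.mul_pos (by omega) (by positivity)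
  -- the auxiliary function
  obtain ⟨G, hG0, hGdeg, hGlen, hGvan⟩ := exists_auxiliary_polynomial hc φ g hC1 hδ hC hb0 hB1 hbB
    haB ha hT1 hLT (by
      have h1 : Fintype.card (Fin n → Fin S) = S ^ n := by simp
      rw [h1, ← mul_pow]
      calc 2 * (S * T) ^ n ≤ 2 * S * (2 ^ n * (S * T) ^ n) := by
            rw [← one_mul (2 * (S * T) ^ n), mul_assoc 2 S, mul_left_comm 2 S, ← mul_assoc S]
            have : 1 ≤ 2 ^ n := Nat.one_le_two_pow
            nlinarith [Nat.zero_le ((S * T) ^ n), Nat.mul_le_mul hS1 this]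
        _ = L ^ (n + 1) := by
            have : 2 * (S * T) = N * L := by
              rw [hL, hT, hk]
              ring
            rw [← mul_pow, this, mul_pow, ← mul_assoc, ← hL, ← pow_succ']
        _ ≤ L ^ d := Nat.pow_le_pow_right hL1 (by omega)) (by omega)
  set F := substFun φ g G with hFdef
  have hF : ContDiff ℂ ∞ F := contDiff_substFun φ hgs G
  have hF0 : ∃ t, F t ≠ 0 := by
    by_contra hcon
    push Not at hcon
    exact hG0 (hindep G hcon)
  obtain ⟨X, hXvan, s, w, hwX, hw0⟩ := exists_minimal_word v.span_eq hF hF0 (pt := pt)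
    ⟨fun _ => ⟨0, hS1⟩, by funext i; simp [pt]⟩
  have hTX : T ≤ X := by
    by_contra hlt
    refine hw0 ?_
    rw [iterDirDeriv_perm hF ((perm_wordOfCounts w).map v), iterDirDeriv_substFun φ hgs hp]
    exact hGvan (fun ν => ⟨w.count ν, (List.count_le_length).trans_lt (by omega)⟩) s
  have hX1 : 1 ≤ X := hT1.trans hTX
  have hX1' : (1 : ℝ) ≤ X := by exact_mod_cast hX1
  -- the radius
  obtain ⟨R, hR0, hRX⟩ : ∃ R : ℝ, 0 ≤ R ∧ R ^ (m * k) = X := by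
    refine ⟨(X : ℝ) ^ (((m * k : ℕ) : ℝ)⁻¹), by positivity, ?_⟩
    exact Real.rpow_inv_natCast_pow (by positivity) (Nat.mul_ne_zero (by omega) (by omega))
  have hRmax : max q (q ^ S * C₃ * C₂ ^ (D - 1)) < R := by
    refine lt_of_pow_lt_pow_left₀ (m * k) hR0 (hN₀.trans_le ?_)
    rw [hRX]
    exact_mod_cast (by omega : N₀ ≤ X)
  have hqR : q ≤ R := ((le_max_left _ _).trans_lt hRmax).le
  have hR1 : 1 ≤ R := hq1.trans hqR
  have hNR : (N : ℝ) ≤ R ^ m := by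
    refine le_of_pow_le_pow_left₀ (by omega : k ≠ 0) (by positivity) ?_
    rw [← pow_mul, hRX]
    exact_mod_cast hTX
  have hLR : (L : ℝ) * R ^ m ≤ 2 * S * X := by
    have : (L : ℝ) = 2 * S * N ^ n := by rw [hL]; push_cast; ring
    rw [this, ← hRX, pow_mul R m k, hk, pow_succ, mul_assoc]
    gcongr
  set Q := houseLength G with hQ
  have hQ0 : 0 ≤ Q := houseLength_nonneg G
  have hQle : Q ≤ (C₁ * X ^ n) ^ X :=
    hGlen.trans (auxiliary_length_bound hc1 hC1 hB1 he1 (hLT.trans hTX) hT1 hTX)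
  -- upper bound for the auxiliary function
  have hM : ∀ t, ‖t‖ ≤ R → ‖F t‖ ≤ Q * Real.exp (A * (d * (2 * S))) ^ X := by
    intro t ht
    refine (norm_substFun_le φ (Real.one_le_exp (by positivity)) (fun j => hgrow j t R hR1 ht)
      hGdeg).trans ?_
    gcongr
    rw [← Real.exp_nat_mul, ← Real.exp_nat_mul]
    refine Real.exp_le_exp.2 ?_
    push_cast
    calc (d : ℝ) * L * (A * R ^ m) = A * (d * (L * R ^ m)) := by ring
      _ ≤ A * (d * (2 * S * X)) := by gcongr
      _ = _ := by ring
  set T' := (X - 1) / n with hT'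
  have hnT' : n * T' < X := by
    have := Nat.mul_div_le (X - 1) n
    rw [← hT'] at this
    omega
  have hT'X : X ≤ 2 * n * T' := by
    have h1 := Nat.div_add_mod (X - 1) n
    have h2 := Nat.mod_lt (X - 1) (by omega : n > 0)
    rw [← hT'] at h1
    have h3 : 2 * n ≤ X := by omega
    have h4 : 2 * n * T' = 2 * (n * T') := by ring
    omega
  have hder := norm_iterDirDeriv_le_of_vanish_on_grid v.span_eq (by linarith : 0 < V) hV hX1 hnT'
    hqR hF hM (fun s w hw => hXvan s w hw) s w hwX
  -- the arithmetic of the first nonzero derivative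
  obtain ⟨hdeg, hlen⟩ := iterDerivation_bounds (zero_le_one.trans hC1) hδ hC hGdeg w
  have hdegX : d * L + w.length * δ ≤ e * X := by
    rw [hwX, he, add_mul]
    have h1 : L ≤ X := hLT.trans hTX
    have h2 : X * δ ≤ n * δ * X := by
      calc X * δ = 1 * δ * X := by ring
        _ ≤ n * δ * X := by gcongr
    gcongr
  obtain ⟨γ, hγ, hγle⟩ := exists_integer_eq_pow_mul_substFun φ g (ha s) hB1 hbB (haB s)
    (hdeg.trans hdegX)
  rw [← iterDirDeriv_substFun φ hgs hp] at hγ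
  have hφb : φ (b : K) ≠ 0 := by simpa using hb0
  have hγ0 : γ ≠ 0 := by
    rintro rfl
    refine mul_ne_zero (pow_ne_zero (e * X) hφb) hw0 ?_
    rw [← hγ]
    simp
  have hhouse : house (γ : K) ≤ (C₂ * X ^ k) ^ X := by
    refine hγle.trans ?_
    have hdegX' : ((d * L + w.length * δ : ℕ) : ℝ) ≤ e * X := by exact_mod_cast hdegX
    calc B ^ (e * X) * houseLength (iterDerivation p w G)
        ≤ B ^ (e * X) * ((C * (e * X)) ^ X * (C₁ * X ^ n) ^ X) := by
          rw [hwX] at hlen hdegX'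
          gcongr
          refine hlen.trans ?_
          gcongr
      _ = _ := by
          rw [pow_mul, ← mul_pow, ← mul_pow, hC₂, hk]
          congr 1
          ring
  have hnorm : ‖φ (γ : K)‖ ≤ (C₃ * X ^ k) ^ X * (q / R) ^ (S * T') := by
    rw [hγ, norm_mul, norm_pow]
    have hφbB : ‖φ (b : K)‖ ≤ B := (norm_embedding_le_house _ _).trans hbB
    have h2n : (2 : ℝ) ^ n ≤ (2 ^ n) ^ X := le_self_pow₀ (one_le_pow₀ one_le_two) (by omega)
    have hqR0 : 0 ≤ q / R := by positivity
    calc ‖φ (b : K)‖ ^ (e * X) * ‖iterDirDeriv (w.map v) F (pt s)‖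
        ≤ B ^ (e * X) * ((V * X) ^ X * ((2 ^ n) ^ X * ((q / R) ^ (S * T') *
          ((C₁ * X ^ n) ^ X * Real.exp (A * (d * (2 * S))) ^ X)))) := by
          refine mul_le_mul (by gcongr) (hder.trans ?_) (norm_nonneg _) (by positivity)
          gcongr
      _ = _ := by
          have : C₃ * (X : ℝ) ^ k = B ^ e * (V * X) * 2 ^ n * (C₁ * X ^ n) *
              Real.exp (A * (d * (2 * S))) := by
            rw [hC₃, hk]
            ring
          rw [this, pow_mul]
          simp only [mul_pow _ _ X]
          ring
  have hmain : 1 ≤ (C₃ * X ^ k) ^ X * (q / R) ^ (S * T') * ((C₂ * X ^ k) ^ X) ^ (D - 1) := by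
    refine (one_le_norm_mul_house_pow φ hγ0).trans ?_
    have := house_nonneg (γ : K)
    gcongr
  have hfinal := le_of_one_le_mul_div_pow (E := E) hX1 (by
      calc T' ≤ X - 1 := Nat.div_le_self _ _
        _ ≤ X := Nat.sub_le _ _) (by linarith) hR1 hq1 hC₂0 hC₃0 hD
    (by rw [← hRX, ← pow_mul]) (by
      rw [hS]
      calc (E + 1) * X ≤ (E + 1) * (2 * n * T') := by gcongr
        _ = _ := by ring) hmain
  exact absurd ((le_max_right _ _).trans_lt hRmax) (not_lt.2 hfinal)

end Core

end SeveralVariables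

/-! ### The criterion -/

section Reduction

open NumberField MvPolynomial

/-- Simultaneous clearing of the denominators of polynomials with coefficients in a number field. -/
theorem exists_integral_multiple {K : Type*} [Field K] [NumberField K] {d : ℕ} {ι : Type*}
    [Finite ι] (φ : K →+* ℂ) (P : ι → MvPolynomial (Fin d) ℂ)
    (hP : ∀ i u, ∃ x : K, φ x = coeff u (P i)) :
    ∃ b : 𝓞 K, b ≠ 0 ∧ ∃ p : ι → MvPolynomial (Fin d) (𝓞 K), ∀ i,
      map (φ.comp (algebraMap (𝓞 K) K)) (p i) = C (φ b) * P i := by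
  choose x hx using hP
  obtain ⟨b, hb⟩ := IsLocalization.exist_integer_multiples_of_finite (nonZeroDivisors (𝓞 K))
    (fun q : Σ i, (P i).support => x q.1 q.2)
  choose a ha using hb
  refine ⟨b, nonZeroDivisors.coe_ne_zero b,
    fun i => ∑ u : (P i).support, monomial (u : Fin d →₀ ℕ) (a ⟨i, u⟩), fun i => ?_⟩
  conv_rhs => rw [(P i).as_sum, Finset.mul_sum, ← Finset.sum_coe_sort]
  rw [map_sum]
  refine Finset.sum_congr rfl fun u _ => ?_
  rw [map_monomial, C_mul_monomial]
  congr 1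
  rw [RingHom.comp_apply, ha, ← hx, Algebra.smul_def, map_mul]

theorem HasFiniteOrderGrowthN.exists_norm_le_exp {n : ℕ} {f : (Fin n → ℂ) → ℂ}
    (hgrow : HasFiniteOrderGrowthN n f) (hf : Continuous f) :
    ∃ (A : ℝ) (m₀ : ℕ), 0 ≤ A ∧ ∀ m ≥ m₀, ∀ (t : Fin n → ℂ) (R : ℝ), 1 ≤ R → ‖t‖ ≤ R →
      ‖f t‖ ≤ Real.exp (A * R ^ m) := by
  obtain ⟨ρ, hρ, h⟩ := hgrow
  obtain ⟨R₀, hR₀⟩ := h 1 one_pos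
  set m₀ := ⌈ρ + 1⌉₊ with hm₀
  set R₁ := max R₀ 1 with hR₁
  have hR₁1 : 1 ≤ R₁ := le_max_right _ _
  have hlarge : ∀ (t : Fin n → ℂ) (R : ℝ), R₁ ≤ R → ‖t‖ ≤ R → ‖f t‖ ≤ Real.exp (R ^ m₀) := by
    intro t R hR ht
    have hset : {z : Fin n → ℂ | ∀ i, ‖z i‖ ≤ R} = Metric.closedBall 0 R := by
      ext z
      rw [mem_closedBall_zero_iff, pi_norm_le_iff_of_nonneg (by linarith)]
      rfl
    have hbdd : BddAbove ((fun z => ‖f z‖) '' {z : Fin n → ℂ | ∀ i, ‖z i‖ ≤ R}) := by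
      rw [hset]
      exact (isCompact_closedBall _ _).bddAbove_image hf.norm.continuousOn
    refine (le_csSup hbdd ⟨t, fun i => (norm_le_pi_norm t i).trans ht, rfl⟩).trans ?_
    refine (hR₀ R ((le_max_left _ _).trans hR)).trans (Real.exp_le_exp.2 ?_)
    rw [← Real.rpow_natCast]
    exact Real.rpow_le_rpow_of_exponent_le (hR₁1.trans hR) (Nat.le_ceil _)
  refine ⟨R₁ ^ m₀, m₀, by positivity, fun m hm t R hR ht => ?_⟩
  rcases le_total R₁ R with hle | hle
  · refine (hlarge t R hle ht).trans (Real.exp_le_exp.2 ?_)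
    calc R ^ m₀ ≤ R ^ m := pow_le_pow_right₀ hR hm
      _ ≤ R₁ ^ m₀ * R ^ m := le_mul_of_one_le_left (by positivity) (one_le_pow₀ hR₁1)
  · refine (hlarge t R₁ le_rfl (ht.trans hle)).trans (Real.exp_le_exp.2 ?_)
    exact le_mul_of_one_le_right (by positivity) (one_le_pow₀ hR)

theorem exists_uniform_growth_comp {n d : ℕ} {f : Fin d → (Fin n → ℂ) → ℂ}
    (hgrow : ∀ i, HasFiniteOrderGrowthN n (f i)) (hf : ∀ i, Continuous (f i))
    (Y : (Fin n → ℂ) →L[ℂ] (Fin n → ℂ)) :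
    ∃ (A : ℝ) (m : ℕ), 0 ≤ A ∧ 1 ≤ m ∧ ∀ i (t : Fin n → ℂ) (R : ℝ), 1 ≤ R → ‖t‖ ≤ R →
      ‖f i (Y t)‖ ≤ Real.exp (A * R ^ m) := by
  choose A m hA hAm using fun i => (hgrow i).exists_norm_le_exp (hf i)
  set y := max 1 ‖Y‖ with hy
  have hy1 : 1 ≤ y := le_max_left _ _
  have hA0 : 0 ≤ ∑ i, A i := Finset.sum_nonneg fun i _ => hA i
  refine ⟨(∑ i, A i) * y ^ (∑ i, m i + 1), ∑ i, m i + 1, by positivity, by omega,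
    fun i t R hR ht => ?_⟩
  have hmi : m i ≤ ∑ i, m i + 1 :=
    (Finset.single_le_sum (fun _ _ => Nat.zero_le _) (Finset.mem_univ i)).trans (Nat.le_succ _)
  refine (hAm i _ hmi (Y t) (y * R) (one_le_mul_of_one_le_of_one_le hy1 hR) ?_).trans
    (Real.exp_le_exp.2 ?_)
  · exact (Y.le_opNorm t).trans
      (mul_le_mul (le_max_right _ _) ht (norm_nonneg _) (by linarith))
  · rw [mul_pow, ← mul_assoc]
    have := Finset.single_le_sum (fun i _ => hA i) (Finset.mem_univ i)
    gcongr

end Reduction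

/-- **Schneider–Lang Criterion in several variables.** Let `d > n ≥ 1`, `K ⊆ ℂ` a
number field, `f₁, …, f_d` algebraically independent entire functions on `ℂ^n` of
finite order of growth, whose partial derivatives `(∂/∂z_ν) f_i` belong to
`K[f₁, …, f_d]`. Let `(y₁, …, y_n)` be a basis of `ℂ^n` over `ℂ`. Then the numbers
`f_i(s₁ y₁ + ⋯ + s_n y_n)`, for `1 ≤ i ≤ d` and `s ∈ ℤ^n`, do not all lie in `K`. -/
theorem schneider_lang_several_variables
    (n d : ℕ) (hn : 1 ≤ n) (hnd : n < d)
    (K : Subfield ℂ) (hK : FiniteDimensional ℚ K)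
    (f : Fin d → (Fin n → ℂ) → ℂ)
    (hent : ∀ i, Differentiable ℂ (f i))
    (horder : ∀ i, HasFiniteOrderGrowthN n (f i))
    (halgind : ∀ P : MvPolynomial (Fin d) ℂ, (∀ m, MvPolynomial.coeff m P ∈ K) →
      (∀ z : Fin n → ℂ, MvPolynomial.eval (fun i => f i z) P = 0) → P = 0)
    (hdiff : ∀ (ν : Fin n) (i : Fin d), ∃ P : MvPolynomial (Fin d) ℂ,
      (∀ m, MvPolynomial.coeff m P ∈ K) ∧
      ∀ z : Fin n → ℂ, fderiv ℂ (f i) z (Pi.single ν 1) =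
        MvPolynomial.eval (fun j => f j z) P)
    (y : Fin n → Fin n → ℂ)
    (hy : LinearIndependent ℂ y)
    (hspan : Submodule.span ℂ (Set.range y) = ⊤) :
    ¬ ∀ (i : Fin d) (s : Fin n → ℤ), f i (∑ ν, (s ν : ℂ) • y ν) ∈ K := by
  intro hmem
  have hNF : NumberField K := { to_charZero := inferInstance, to_finiteDimensional := hK }
  choose P hPK hPd using hdiff
  obtain ⟨b, hb0, p, hp⟩ := exists_integral_multiple K.subtype
    (fun q : Fin n × Fin d => P q.1 q.2) (fun q u => ⟨⟨_, hPK q.1 q.2 u⟩, rfl⟩)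
  have hb0' : K.subtype (b : K) ≠ 0 := by simpa using hb0
  let Y : (Fin n → ℂ) ≃L[ℂ] (Fin n → ℂ) :=
    (Module.Basis.mk hy hspan.ge).equivFun.symm.toContinuousLinearEquiv
  have hY : ∀ t, Y t = ∑ ν, t ν • y ν := fun t => by
    simp [Y, Module.Basis.equivFun_symm_apply]
  obtain ⟨A, m, hA, hm, hgrow⟩ := exists_uniform_growth_comp horder
    (fun i => (hent i).continuous) (Y : (Fin n → ℂ) →L[ℂ] (Fin n → ℂ))
  have hsubst : ∀ (G : MvPolynomial (Fin d) (NumberField.RingOfIntegers K)) t,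
      substFun K.subtype (fun i t => f i (Y t)) G t = MvPolynomial.eval (fun i => f i (Y t))
        (MvPolynomial.map (K.subtype.comp (algebraMap (NumberField.RingOfIntegers K) K)) G) :=
    fun G t => (MvPolynomial.eval_map _ _ _).symm
  refine false_of_values_mem_numberField (K := K) hn hnd K.subtype
    (g := fun i t => f i (Y t)) (fun j => (hent j).comp Y.differentiable) hA hm hgrow
    (((Pi.basisFun ℂ (Fin n)).map Y.symm.toLinearEquiv).isUnitSMul
      (w := fun _ => K.subtype (b : K)) fun _ => hb0'.isUnit)
    (p := fun ν i => p (ν, i)) (fun ν i => ?_) (fun G hG => ?_) (fun j s => ?_)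
  · funext t
    rw [hsubst, hp, MvPolynomial.eval_mul, MvPolynomial.eval_C, ← hPd]
    rw [dirDeriv, Module.Basis.isUnitSMul_apply, map_smul, smul_eq_mul]
    congr 1
    have : (fun t => f i (Y t)) = f i ∘ Y := rfl
    rw [this, Y.comp_right_fderiv]
    simp
  · have hinj : Function.Injective
        (K.subtype.comp (algebraMap (NumberField.RingOfIntegers K) K)) :=
      K.subtype.injective.comp (FaithfulSMul.algebraMap_injective _ _)
    refine MvPolynomial.map_injective _ hinj ?_
    rw [map_zero]
    refine halgind _ (fun u => ?_) fun z => ?_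
    · rw [MvPolynomial.coeff_map]
      exact Subtype.property _
    · have := hG (Y.symm z)
      rw [hsubst] at this
      simpa using this
  · have := hmem j fun i => (s i : ℤ)
    refine ⟨⟨_, this⟩, ?_⟩
    simp [hY]
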